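/- There exists an absolute constant C > 0 with the following property. For every measurable μ : ℂ → ℂ vanishing outside the lower half-plane {ζ : Im ζ < 0} and satisfying |μ| ≤ 1 a.e., every real n ≥ 2, every α ≥ 1, and every box B of type (n, α) in the upper half-plane, one has ⨍_B (2 Im(z)|Tμ(z)|)² dA(z)/Im z ≤ Σ²_ℍ + C/log n. -/

import Mathlib

open Complex MeasureTheory Filter Topology Set

/-- The derivative of the Beurling transform of `μ`:
`Tμ(z) = -(2/π) ∫_{Im ζ < 0} μ(ζ)/(ζ−z)³ dA(ζ)`. -/
noncomputable def Tderiv (μ : ℂ → ℂ) (z : ℂ) : ℂ :=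
  -(2 / (Real.pi : ℂ)) * ∫ ζ in {ζ : ℂ | ζ.im < 0}, μ ζ / (ζ - z)^3

/-- The modified Beurling transform
`S^#μ(z) = -(1/π) ∫_{Im ζ<0} μ(ζ)[(ζ−z)⁻² − ζ⁻²] dA(ζ)`. -/
noncomputable def Ssharp (μ : ℂ → ℂ) (z : ℂ) : ℂ :=
  -(1 / (Real.pi : ℂ)) * ∫ ζ in {ζ : ℂ | ζ.im < 0}, μ ζ * (((ζ - z)^2)⁻¹ - (ζ^2)⁻¹)

/-- The asymptotic variance over `[0,1]` of a function on the upper half-plane: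
`σ²_{[0,1]}(b) = limsup_{y→0⁺} (1/log(1/y)) ∫₀¹ |b(x+iy)|² dx`. -/
noncomputable def sigma01 (b : ℂ → ℂ) : ℝ :=
  Filter.limsup (fun y : ℝ =>
    (1 / Real.log (1 / y)) *
      ∫ x in (0:ℝ)..1, ‖b ((x : ℂ) + (y : ℂ) * Complex.I)‖^2) (𝓝[>] (0:ℝ))

/-- `Σ²_ℍ`: the supremum of `σ²_{[0,1]}(S^#μ)` over all measurable `μ` with
`|μ| ≤ 1` a.e. supported in the lower half-plane. -/
noncomputable def SigmaSqH : ℝ :=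
  sSup {v : ℝ | ∃ μ : ℂ → ℂ, Measurable μ ∧ (∀ᵐ ζ : ℂ, ‖μ ζ‖ ≤ 1) ∧
    (∀ ζ : ℂ, 0 ≤ ζ.im → μ ζ = 0) ∧ v = sigma01 (Ssharp μ)}

/-- truncated cubic kernel -/
noncomputable def kerR (r : ℝ) (z ζ : ℂ) : ℝ := (Ici r).indicator (fun ρ : ℝ => (ρ ^ 3)⁻¹) ‖ζ - z‖

lemma kerR_nonneg {r : ℝ} (hr : 0 < r) (z ζ : ℂ) : 0 ≤ kerR r z ζ := by
  unfold kerR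
  apply indicator_nonneg
  intro x hx
  have : 0 < x := lt_of_lt_of_le hr hx
  positivity

lemma kerR_eq {r : ℝ} {z ζ : ℂ} (h : r ≤ ‖ζ - z‖) : kerR r z ζ = (‖ζ - z‖ ^ 3)⁻¹ := by
  unfold kerR
  rw [indicator_of_mem]
  exact h

lemma kerR_aux {r : ℝ} (hr : 0 < r) (y : ℝ) (hy : 0 < y) :
    y ^ (Module.finrank ℝ ℂ - 1) • (Ici r).indicator (fun ρ : ℝ => (ρ ^ 3)⁻¹) y
      = (Ici r).indicator (fun ρ : ℝ => ρ ^ (-2 : ℝ)) y := by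
  rw [Complex.finrank_real_complex]
  by_cases h : y ∈ Ici r
  · rw [indicator_of_mem h, indicator_of_mem h]
    rw [Real.rpow_neg hy.le]
    simp only [smul_eq_mul]
    norm_num
    field_simp
  · rw [indicator_of_notMem h, indicator_of_notMem h]; simp

lemma kerR_integrable {r : ℝ} (hr : 0 < r) (z : ℂ) : Integrable (kerR r z) := by
  have h0 : Integrable (fun ζ : ℂ => (Ici r).indicator (fun ρ : ℝ => (ρ ^ 3)⁻¹) ‖ζ‖) := by
    rw [integrable_fun_norm_addHaar (volume : Measure ℂ)
      (f := (Ici r).indicator (fun ρ : ℝ => (ρ ^ 3)⁻¹))]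
    rw [integrableOn_congr_fun (s := Ioi (0:ℝ)) (fun y hy => kerR_aux hr y hy) measurableSet_Ioi]
    apply Integrable.integrableOn
    rw [integrable_indicator_iff measurableSet_Ici, integrableOn_Ici_iff_integrableOn_Ioi]
    exact integrableOn_Ioi_rpow_of_lt (by norm_num) hr
  exact h0.comp_sub_right z

lemma kerR_integral {r : ℝ} (hr : 0 < r) (z : ℂ) : ∫ ζ, kerR r z ζ = 2 * Real.pi / r := by
  have h1 : ∫ ζ, kerR r z ζ = ∫ ζ : ℂ, (Ici r).indicator (fun ρ : ℝ => (ρ ^ 3)⁻¹) ‖ζ‖ :=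
    integral_sub_right_eq_self (fun ζ : ℂ => (Ici r).indicator (fun ρ : ℝ => (ρ ^ 3)⁻¹) ‖ζ‖) z
  rw [h1, integral_fun_norm_addHaar (volume : Measure ℂ)
      ((Ici r).indicator (fun ρ : ℝ => (ρ ^ 3)⁻¹))]
  rw [setIntegral_congr_fun measurableSet_Ioi (fun y hy => kerR_aux hr y hy)]
  rw [setIntegral_indicator measurableSet_Ici]
  have : Ioi (0:ℝ) ∩ Ici r = Ici r := by
    ext x; simp only [mem_inter_iff, mem_Ioi, mem_Ici]; constructor
    · exact fun h => h.2
    · exact fun h => ⟨by linarith, h⟩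
  rw [this, integral_Ici_eq_integral_Ioi, integral_Ioi_rpow_of_lt (by norm_num) hr]
  rw [Complex.finrank_real_complex, Measure.real, Complex.volume_ball]
  norm_num
  rw [Real.rpow_neg hr.le, Real.rpow_one]
  field_simp

/-- product integrals on `ℂ` -/
lemma prod_integrableOn {f g : ℝ → ℝ} {s t : Set ℝ} (hf : IntegrableOn f s) (hg : IntegrableOn g t) :
    IntegrableOn (fun z : ℂ => f z.re * g z.im) (s ×ℂ t) := by
  have h := Integrable.mul_prod hf hg
  rw [Measure.prod_restrict] at h
  have := (Complex.volume_preserving_equiv_real_prod.integrableOn_comp_preimage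
    (Complex.measurableEquivRealProd.measurableEmbedding)
    (f := fun p : ℝ × ℝ => f p.1 * g p.2) (s := s ×ˢ t)).2 h
  exact this

lemma prod_integral (f g : ℝ → ℝ) (s t : Set ℝ) :
    ∫ z in s ×ℂ t, f z.re * g z.im = (∫ x in s, f x) * ∫ y in t, g y := by
  rw [← setIntegral_prod_mul f g s t]
  exact Complex.volume_preserving_equiv_real_prod.setIntegral_preimage_emb
    (Complex.measurableEquivRealProd.measurableEmbedding) (fun p : ℝ × ℝ => f p.1 * g p.2) (s ×ˢ t)

/-- strip kernel -/
noncomputable def kerS (h : ℝ) (z ζ : ℂ) : ℝ :=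
  (univ ×ℂ Icc (-h) 0).indicator
    (fun ζ : ℂ => ((ζ.re - z.re) ^ 2 + z.im ^ 2)⁻¹ * z.im⁻¹) ζ

lemma cauchy_int {y : ℝ} (hy : 0 < y) (x : ℝ) :
    Integrable (fun u : ℝ => ((u - x) ^ 2 + y ^ 2)⁻¹) ∧
      ∫ u : ℝ, ((u - x) ^ 2 + y ^ 2)⁻¹ = Real.pi / y := by
  have e : (fun u : ℝ => ((u - x) ^ 2 + y ^ 2)⁻¹)
      = fun u : ℝ => (fun v : ℝ => (y^2)⁻¹ * (fun w : ℝ => (1 + w^2)⁻¹) (v / y)) (u - x) := by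
    funext u
    field_simp
    ring
  constructor
  · rw [e]
    exact ((integrable_inv_one_add_sq.comp_div hy.ne').const_mul _).comp_sub_right x
  · rw [e, integral_sub_right_eq_self (fun v : ℝ => (y^2)⁻¹ * (fun w : ℝ => (1 + w^2)⁻¹) (v / y)) x,
      integral_const_mul, Measure.integral_comp_div (fun w : ℝ => (1 + w^2)⁻¹) y, integral_univ_inv_one_add_sq, abs_of_pos hy]
    simp only [smul_eq_mul]
    field_simp

lemma reProdIm_meas {s t : Set ℝ} (hs : MeasurableSet s) (ht : MeasurableSet t) :
    MeasurableSet (s ×ℂ t) :=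
  (Complex.measurable_re hs).inter (Complex.measurable_im ht)

lemma kerS_integrable (h : ℝ) {z : ℂ} (hz : 0 < z.im) : Integrable (kerS h z) := by
  unfold kerS
  rw [integrable_indicator_iff (reProdIm_meas MeasurableSet.univ measurableSet_Icc)]
  exact prod_integrableOn (f := fun u => ((u - z.re) ^ 2 + z.im ^ 2)⁻¹) (g := fun _ => z.im⁻¹)
    (cauchy_int hz z.re).1.integrableOn (by simp)

lemma kerS_integral {h : ℝ} (hh : 0 ≤ h) {z : ℂ} (hz : 0 < z.im) :
    ∫ ζ, kerS h z ζ = Real.pi * h / z.im ^ 2 := by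
  unfold kerS
  rw [integral_indicator (reProdIm_meas MeasurableSet.univ measurableSet_Icc)]
  rw [prod_integral (fun u => ((u - z.re) ^ 2 + z.im ^ 2)⁻¹) (fun _ => z.im⁻¹)]
  rw [setIntegral_univ, (cauchy_int hz z.re).2]
  simp [Measure.real, hh]
  field_simp

lemma kerS_nonneg (h : ℝ) {z : ℂ} (hz : 0 < z.im) (ζ : ℂ) : 0 ≤ kerS h z ζ := by
  unfold kerS
  apply indicator_nonneg
  intro x hx
  positivity

lemma kerS_ge {h : ℝ} {z ζ : ℂ} (hz : 0 < z.im) (h0 : ζ.im ≤ 0) (h1 : -h ≤ ζ.im) :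
    (‖ζ - z‖ ^ 3)⁻¹ ≤ kerS h z ζ := by
  unfold kerS
  rw [indicator_of_mem (by exact ⟨trivial, h1, h0⟩), ← mul_inv]
  have e : ‖ζ - z‖ ^ 2 = (ζ.re - z.re) ^ 2 + (ζ.im - z.im) ^ 2 := by
    rw [← Complex.normSq_eq_norm_sq, Complex.normSq_apply]; simp; ring
  have h2 : z.im ≤ ‖ζ - z‖ := by
    apply le_of_sq_le_sq _ (norm_nonneg _)
    rw [e]; nlinarith [sq_nonneg (ζ.re - z.re)]
  have h3 : (ζ.re - z.re) ^ 2 + z.im ^ 2 ≤ ‖ζ - z‖ ^ 2 := by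
    rw [e]; nlinarith
  apply inv_anti₀ (by positivity)
  calc _ ≤ ‖ζ - z‖ ^ 2 * ‖ζ - z‖ := by gcongr
    _ = _ := by ring


lemma measL : MeasurableSet {ζ : ℂ | ζ.im < 0} := measurableSet_lt Complex.measurable_im measurable_const

lemma im_le_norm_sub {z ζ : ℂ} (hζ : ζ.im ≤ 0) : z.im ≤ ‖ζ - z‖ := by
  have := Complex.abs_im_le_norm (ζ - z)
  rw [Complex.sub_im] at this
  have := neg_le_abs (ζ.im - z.im)
  linarith

lemma T_meas {μ : ℂ → ℂ} (hm : Measurable μ) (z : ℂ) : Measurable (fun ζ => μ ζ / (ζ - z)^3) := by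
  fun_prop

lemma T_norm_le {μ : ℂ → ℂ} (hb : ∀ ζ, ‖μ ζ‖ ≤ 1) {z ζ : ℂ} (hζ : ζ.im ≤ 0) :
    ‖μ ζ / (ζ - z)^3‖ ≤ kerR z.im z ζ := by
  rw [kerR_eq (im_le_norm_sub hζ), norm_div, norm_pow, div_eq_mul_inv]
  exact mul_le_of_le_one_left (by positivity) (hb ζ)

lemma T_int {μ : ℂ → ℂ} (hm : Measurable μ) (hb : ∀ ζ, ‖μ ζ‖ ≤ 1) {z : ℂ} (hz : 0 < z.im) :
    IntegrableOn (fun ζ => μ ζ / (ζ - z)^3) {ζ : ℂ | ζ.im < 0} := by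
  apply Integrable.mono' (kerR_integrable hz z).integrableOn (T_meas hm z).aestronglyMeasurable
  filter_upwards [ae_restrict_mem measL] with ζ hζ
  exact T_norm_le hb (le_of_lt hζ)

lemma norm_two_pi : ‖-(2 / (Real.pi : ℂ))‖ = 2 / Real.pi := by
  rw [norm_neg, norm_div, Complex.norm_real, Real.norm_of_nonneg Real.pi_pos.le]; norm_num

lemma T_bound {μ : ℂ → ℂ} (hb : ∀ ζ, ‖μ ζ‖ ≤ 1) {z : ℂ} (hz : 0 < z.im) :
    z.im * ‖Tderiv μ z‖ ≤ 4 := by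
  have h1 : ‖∫ ζ in {ζ : ℂ | ζ.im < 0}, μ ζ / (ζ - z)^3‖ ≤ 2 * Real.pi / z.im := by
    calc _ ≤ ∫ ζ in {ζ : ℂ | ζ.im < 0}, kerR z.im z ζ := by
          apply norm_integral_le_of_norm_le (kerR_integrable hz z).integrableOn
          filter_upwards [ae_restrict_mem measL] with ζ hζ
          exact T_norm_le hb (le_of_lt hζ)
      _ ≤ ∫ ζ, kerR z.im z ζ := setIntegral_le_integral (kerR_integrable hz z)
          (Eventually.of_forall (kerR_nonneg hz z))
      _ = _ := kerR_integral hz z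
  unfold Tderiv
  rw [norm_mul, norm_two_pi]
  have hp := Real.pi_pos
  calc _ ≤ z.im * (2 / Real.pi * (2 * Real.pi / z.im)) := by gcongr
    _ = 4 := by field_simp; norm_num

lemma near_bound {z w ζ : ℂ} (hz : 0 < z.im) (hζ : ζ.im ≤ 0) (hw : w ∈ Metric.ball z (z.im / 2)) :
    (‖ζ - w‖ ^ 3)⁻¹ ≤ 8 * kerR z.im z ζ := by
  have h1 := im_le_norm_sub (z := z) hζ
  rw [kerR_eq h1]
  rw [Metric.mem_ball, dist_eq_norm] at hw
  have h2 : ‖ζ - z‖ ≤ ‖ζ - w‖ + ‖w - z‖ := by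
    have := norm_add_le (ζ - w) (w - z); simpa using this
  have h3 : ‖ζ - z‖ / 2 ≤ ‖ζ - w‖ := by linarith
  have h4 : 0 < ‖ζ - z‖ := by linarith
  calc _ ≤ ((‖ζ - z‖ / 2) ^ 3)⁻¹ := by gcongr
    _ = _ := by field_simp; norm_num

lemma ball_im_pos {z w : ℂ} (hz : 0 < z.im) (hw : w ∈ Metric.ball z (z.im / 2)) : 0 < w.im := by
  rw [Metric.mem_ball, dist_eq_norm] at hw
  have := Complex.abs_im_le_norm (w - z)
  rw [Complex.sub_im] at this
  have := neg_le_abs (w.im - z.im)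
  linarith

lemma T_cont {μ : ℂ → ℂ} (hm : Measurable μ) (hb : ∀ ζ, ‖μ ζ‖ ≤ 1) {z : ℂ} (hz : 0 < z.im) :
    ContinuousAt (Tderiv μ) z := by
  unfold Tderiv
  apply ContinuousAt.mul continuousAt_const
  apply continuousAt_of_dominated (bound := fun ζ => 8 * kerR z.im z ζ)
  · exact Eventually.of_forall fun w => (T_meas hm w).aestronglyMeasurable
  · filter_upwards [Metric.ball_mem_nhds z (half_pos hz)] with w hw
    filter_upwards [ae_restrict_mem measL] with ζ hζ
    rw [norm_div, norm_pow, div_eq_mul_inv]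
    exact (mul_le_of_le_one_left (by positivity) (hb ζ)).trans (near_bound hz (le_of_lt hζ) hw)
  · exact ((kerR_integrable hz z).const_mul 8).integrableOn
  · filter_upwards [ae_restrict_mem measL] with ζ hζ
    have : ζ - z ≠ 0 := by
      intro h
      have := im_le_norm_sub (z := z) (le_of_lt hζ)
      rw [h] at this; simp at this; linarith
    have c : ContinuousAt (fun x : ℂ => (ζ - x) ^ 3) z := by fun_prop
    exact continuousAt_const.div c (pow_ne_zero 3 this)

/-- the integrand of `Ssharp` is integrable at one point -/
def Good (μ : ℂ → ℂ) (z : ℂ) : Prop :=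
  IntegrableOn (fun ζ => μ ζ * (((ζ - z)^2)⁻¹ - (ζ^2)⁻¹)) {ζ : ℂ | ζ.im < 0}

lemma Good_trans {μ : ℂ → ℂ} (hm : Measurable μ) (hb : ∀ ζ, ‖μ ζ‖ ≤ 1) {z w : ℂ} (hz : 0 < z.im)
    (hw : 0 < w.im) (h : Good μ z) : Good μ w := by
  have h2 : IntegrableOn (fun ζ => μ ζ * (((ζ - w)^2)⁻¹ - ((ζ - z)^2)⁻¹)) {ζ : ℂ | ζ.im < 0} := by
    apply Integrable.mono' (g := fun ζ => ‖w - z‖ * (2 * (kerR z.im z ζ + kerR w.im w ζ)))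
    · exact ((((kerR_integrable hz z).add (kerR_integrable hw w)).const_mul 2).const_mul _).integrableOn
    · apply Measurable.aestronglyMeasurable; fun_prop
    · filter_upwards [ae_restrict_mem measL] with ζ hζ
      have e1 := im_le_norm_sub (z := z) (le_of_lt hζ)
      have e2 := im_le_norm_sub (z := w) (le_of_lt hζ)
      rw [kerR_eq e1, kerR_eq e2]
      have n1 : ζ - z ≠ 0 := by rw [← norm_pos_iff]; linarith
      have n2 : ζ - w ≠ 0 := by rw [← norm_pos_iff]; linarith
      have e3 : ((ζ - w)^2)⁻¹ - ((ζ - z)^2)⁻¹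
          = (w - z) * ((ζ - w)⁻¹ ^ 2 * (ζ - z)⁻¹ + (ζ - w)⁻¹ * (ζ - z)⁻¹ ^ 2) := by
        field_simp
        ring
      rw [norm_mul, e3, norm_mul]
      have e4 : ‖(ζ - w)⁻¹ ^ 2 * (ζ - z)⁻¹ + (ζ - w)⁻¹ * (ζ - z)⁻¹ ^ 2‖
          ≤ 2 * ((‖ζ - z‖ ^ 3)⁻¹ + (‖ζ - w‖ ^ 3)⁻¹) := by
        refine (norm_add_le _ _).trans ?_
        simp only [norm_mul, norm_pow, norm_inv, ← inv_pow]
        have p1 : 0 ≤ ‖ζ - w‖⁻¹ := by positivity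
        have p2 : 0 ≤ ‖ζ - z‖⁻¹ := by positivity
        generalize ‖ζ - w‖⁻¹ = a at *
        generalize ‖ζ - z‖⁻¹ = b at *
        nlinarith [mul_nonneg (add_nonneg p1 p2) (sq_nonneg (a - b)), pow_nonneg p1 3, pow_nonneg p2 3]
      calc _ ≤ 1 * (‖w - z‖ * (2 * ((‖ζ - z‖ ^ 3)⁻¹ + (‖ζ - w‖ ^ 3)⁻¹))) := by
            gcongr
            exact hb ζ
        _ = _ := one_mul _
  have h3 := h.add h2
  unfold Good
  refine Integrable.congr h3 (Eventually.of_forall fun ζ => ?_)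
  simp only [Pi.add_apply]
  ring

lemma S_deriv {μ : ℂ → ℂ} (hm : Measurable μ) (hb : ∀ ζ, ‖μ ζ‖ ≤ 1) {z : ℂ} (hz : 0 < z.im)
    (h : Good μ z) : HasDerivAt (Ssharp μ) (Tderiv μ z) z := by
  have := (hasDerivAt_integral_of_dominated_loc_of_deriv_le
    (μ := volume.restrict {ζ : ℂ | ζ.im < 0}) (x₀ := z) (s := Metric.ball z (z.im / 2))
    (F := fun w ζ => μ ζ * (((ζ - w)^2)⁻¹ - (ζ^2)⁻¹))
    (F' := fun w ζ => 2 * (μ ζ / (ζ - w)^3)) (bound := fun ζ => 2 * (8 * kerR z.im z ζ))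
    (Metric.ball_mem_nhds z (half_pos hz))
    (Eventually.of_forall fun w => by
      apply Measurable.aestronglyMeasurable; fun_prop) h
    (by apply Measurable.aestronglyMeasurable; fun_prop)
    (by
      filter_upwards [ae_restrict_mem measL] with ζ hζ w hw
      rw [norm_mul, norm_div, norm_pow, div_eq_mul_inv]
      have := (mul_le_of_le_one_left (b := (‖ζ - w‖ ^ 3)⁻¹) (by positivity) (hb ζ)).trans
        (near_bound hz (le_of_lt hζ) hw)
      simp only [Complex.norm_ofNat]
      linarith)
    (((kerR_integrable hz z).const_mul 8).const_mul 2).integrableOn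
    (by
      filter_upwards [ae_restrict_mem measL] with ζ hζ w hw
      have hw' := ball_im_pos hz hw
      have e2 := im_le_norm_sub (z := w) (le_of_lt hζ)
      have n2 : ζ - w ≠ 0 := by rw [← norm_pos_iff]; linarith
      have d := (((((hasDerivAt_id w).const_sub ζ).pow 2).inv (pow_ne_zero 2 n2)).sub_const
        ((ζ^2)⁻¹)).const_mul (μ ζ)
      refine d.congr_deriv ?_
      simp only [id]
      field_simp
      norm_num
      ring)).2
  have h2 := this.const_mul (-(1 / (Real.pi : ℂ)))
  unfold Ssharp Tderiv
  refine h2.congr_deriv ?_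
  rw [integral_const_mul]
  ring

lemma S_bad {μ : ℂ → ℂ} (hm : Measurable μ) (hb : ∀ ζ, ‖μ ζ‖ ≤ 1) (h : ¬ Good μ I) {z : ℂ}
    (hz : 0 < z.im) : Ssharp μ z = 0 := by
  unfold Ssharp
  rw [integral_undef, mul_zero]
  intro h'
  exact h (Good_trans hm hb hz (by simp) h')


lemma chg {E : Type*} [NormedAddCommGroup E] [NormedSpace ℝ E] (f : ℂ → E) {a : ℝ} (ha : 0 < a)
    (c : ℂ) : ∫ ζ : ℂ, f ((a : ℂ) * ζ + c) = (a ^ 2)⁻¹ • ∫ ζ, f ζ := by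
  have h := Measure.integral_comp_smul (volume : Measure ℂ) (fun ζ => f (ζ + c)) a
  rw [integral_add_right_eq_self f c, Complex.finrank_real_complex] at h
  rw [abs_of_pos (by positivity)] at h
  rw [← h]
  simp [Complex.real_smul]

lemma chg_set {E : Type*} [NormedAddCommGroup E] [NormedSpace ℝ E] (f : ℂ → E) {a : ℝ} (ha : 0 < a)
    (c : ℂ) {S : Set ℂ} (hS : MeasurableSet S) :
    ∫ ζ in (fun ζ : ℂ => (a : ℂ) * ζ + c) ⁻¹' S, f ((a : ℂ) * ζ + c) = (a ^ 2)⁻¹ • ∫ ζ in S, f ζ := by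
  rw [← integral_indicator hS, ← chg _ ha c, ← integral_indicator (by
    exact (by fun_prop : Measurable (fun ζ : ℂ => (a : ℂ) * ζ + c)) hS)]
  rfl

lemma T_scale (μ : ℂ → ℂ) {a : ℝ} (ha : 0 < a) (c : ℝ) (z : ℂ) :
    Tderiv μ ((a : ℂ) * z + c) = (a : ℂ)⁻¹ * Tderiv (fun ω => μ ((a : ℂ) * ω + c)) z := by
  unfold Tderiv
  have h := chg_set (fun ζ => μ ζ / (ζ - ((a : ℂ) * z + c))^3) ha (c : ℂ) measL
  have e : (fun ζ : ℂ => (a : ℂ) * ζ + c) ⁻¹' {ζ : ℂ | ζ.im < 0} = {ζ : ℂ | ζ.im < 0} := by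
    ext ζ
    simp only [mem_preimage, mem_ofPred_eq, add_im, mul_im, ofReal_re, ofReal_im, zero_mul, add_zero]
    constructor
    · intro h; by_contra h'; push Not at h'; nlinarith [mul_nonneg ha.le h']
    · intro h; nlinarith
  rw [e] at h
  have ha' : (a : ℂ) ≠ 0 := by exact_mod_cast ha.ne'
  have e2 : ∀ ζ : ℂ, μ ((a : ℂ) * ζ + c) / ((a : ℂ) * ζ + c - ((a : ℂ) * z + c))^3
      = ((a : ℂ)^3)⁻¹ * (μ ((a : ℂ) * ζ + c) / (ζ - z)^3) := by
    intro ζ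
    have : (a : ℂ) * ζ + c - ((a : ℂ) * z + c) = a * (ζ - z) := by ring
    rw [this, mul_pow, div_eq_mul_inv, mul_inv, div_eq_mul_inv]; ring
  simp_rw [e2] at h
  rw [integral_const_mul, Complex.real_smul] at h
  have h3 : ∫ ζ in {ζ : ℂ | ζ.im < 0}, μ ζ / (ζ - ((a : ℂ) * z + c))^3
      = (a : ℂ)⁻¹ * ∫ ζ in {ζ : ℂ | ζ.im < 0}, μ ((a : ℂ) * ζ + c) / (ζ - z)^3 := by
    push_cast at h
    field_simp at h ⊢
    rw [h]
  rw [h3]; ring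

noncomputable def Fd (μ : ℂ → ℂ) (z : ℂ) : ℝ := (2 * z.im * ‖Tderiv μ z‖)^2 / z.im

lemma Fd_scale (μ : ℂ → ℂ) {a : ℝ} (ha : 0 < a) (c : ℝ) (z : ℂ) :
    Fd μ ((a : ℂ) * z + c) = a⁻¹ * Fd (fun ω => μ ((a : ℂ) * ω + c)) z := by
  unfold Fd
  rw [T_scale μ ha]
  simp only [add_im, mul_im, ofReal_re, ofReal_im, zero_mul, add_zero, norm_mul, norm_inv,
    Complex.norm_real, Real.norm_of_nonneg ha.le]
  field_simp

lemma Fd_tile (μ : ℂ → ℂ) {a : ℝ} (ha : 0 < a) (c : ℝ) {S : Set ℂ} (hS : MeasurableSet S) :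
    ∫ z in S, Fd μ z = a * ∫ z in (fun ζ : ℂ => (a : ℂ) * ζ + c) ⁻¹' S,
      Fd (fun ω => μ ((a : ℂ) * ω + c)) z := by
  have h := chg_set (Fd μ) ha (c : ℂ) hS
  simp_rw [Fd_scale μ ha c] at h
  rw [integral_const_mul, smul_eq_mul] at h
  field_simp at h
  exact h.symm

lemma Fd_nonneg (μ : ℂ → ℂ) {z : ℂ} (hz : 0 < z.im) : 0 ≤ Fd μ z := by
  unfold Fd; positivity

lemma Fd_le {μ : ℂ → ℂ} (hb : ∀ ζ, ‖μ ζ‖ ≤ 1) {z : ℂ} (hz : 0 < z.im) : Fd μ z ≤ 64 / z.im := by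
  unfold Fd
  have := T_bound hb hz
  have h0 : 0 ≤ z.im * ‖Tderiv μ z‖ := by positivity
  gcongr
  nlinarith

lemma Fd_contOn {μ : ℂ → ℂ} (hm : Measurable μ) (hb : ∀ ζ, ‖μ ζ‖ ≤ 1) :
    ContinuousOn (Fd μ) {z | 0 < z.im} := by
  intro z hz
  have := (T_cont hm hb hz).norm
  have h2 : ContinuousAt Complex.im z := Complex.continuous_im.continuousAt
  apply ContinuousAt.continuousWithinAt
  unfold Fd
  exact (((continuousAt_const.mul h2).mul this).pow 2).div h2 (ne_of_gt hz)

lemma T_diff {μ₁ μ₂ : ℂ → ℂ} (hm₁ : Measurable μ₁) (hm₂ : Measurable μ₂) (hb₁ : ∀ ζ, ‖μ₁ ζ‖ ≤ 1)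
    (hb₂ : ∀ ζ, ‖μ₂ ζ‖ ≤ 1) {x₀ W h t : ℝ} (hh : 0 < h) (ht : 0 < t)
    (heq : ∀ ζ : ℂ, ζ.re ∈ Ioo x₀ (x₀ + W) → -ζ.im ∈ Ioo h t → μ₁ ζ = μ₂ ζ)
    {z : ℂ} (hz : 0 < z.im) :
    ‖Tderiv μ₁ z - Tderiv μ₂ z‖ ≤ 4 * h / z.im ^ 2 + 8 / t + 8 / max (z.re - x₀) z.im
      + 8 / max (x₀ + W - z.re) z.im := by
  set d₁ := max (z.re - x₀) z.im with hd₁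
  set d₂ := max (x₀ + W - z.re) z.im with hd₂
  have p1 : 0 < d₁ := lt_max_of_lt_right hz
  have p2 : 0 < d₂ := lt_max_of_lt_right hz
  have hI : Integrable (fun ζ => 2 * (kerS h z ζ + kerR t z ζ + kerR d₁ z ζ + kerR d₂ z ζ)) :=
    ((((kerS_integrable h hz).add (kerR_integrable ht z)).add (kerR_integrable p1 z)).add
      (kerR_integrable p2 z)).const_mul 2
  have key : ‖∫ ζ in {ζ : ℂ | ζ.im < 0}, (μ₁ ζ / (ζ - z)^3 - μ₂ ζ / (ζ - z)^3)‖
      ≤ 2 * (Real.pi * h / z.im ^ 2 + 2 * Real.pi / t + 2 * Real.pi / d₁ + 2 * Real.pi / d₂) := by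
    calc _ ≤ ∫ ζ in {ζ : ℂ | ζ.im < 0}, 2 * (kerS h z ζ + kerR t z ζ + kerR d₁ z ζ + kerR d₂ z ζ) := by
          apply norm_integral_le_of_norm_le hI.integrableOn
          filter_upwards [ae_restrict_mem measL] with ζ hζ
          have hζ' : ζ.im < 0 := hζ
          have n1 := kerS_nonneg h hz ζ
          have n2 := kerR_nonneg ht z ζ
          have n3 := kerR_nonneg p1 z ζ
          have n4 := kerR_nonneg p2 z ζ
          by_cases hB : ζ.re ∈ Ioo x₀ (x₀ + W) ∧ -ζ.im ∈ Ioo h t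
          · rw [heq ζ hB.1 hB.2]; simp; linarith
          have hk : (‖ζ - z‖ ^ 3)⁻¹ ≤ kerS h z ζ + kerR t z ζ + kerR d₁ z ζ + kerR d₂ z ζ := by
            have e1 := im_le_norm_sub (z := z) (le_of_lt hζ)
            have e2 := Complex.abs_re_le_norm (ζ - z)
            have e3 := Complex.abs_im_le_norm (ζ - z)
            rw [Complex.sub_re] at e2
            rw [Complex.sub_im] at e3
            by_cases c1 : -ζ.im ≤ h
            · have := kerS_ge hz hζ'.le (by linarith : -h ≤ ζ.im)
              linarith
            by_cases c2 : t ≤ -ζ.im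
            · have := neg_le_abs (ζ.im - z.im)
              have := kerR_eq (r := t) (z := z) (ζ := ζ) (by linarith)
              linarith
            by_cases c3 : ζ.re ≤ x₀
            · have := neg_le_abs (ζ.re - z.re)
              have := kerR_eq (r := d₁) (z := z) (ζ := ζ) (max_le (by linarith) e1)
              linarith
            by_cases c4 : x₀ + W ≤ ζ.re
            · have := le_abs_self (ζ.re - z.re)
              have := kerR_eq (r := d₂) (z := z) (ζ := ζ) (max_le (by linarith) e1)
              linarith
            push Not at c1 c2 c3 c4
            exact absurd ⟨⟨c3, c4⟩, ⟨c1, c2⟩⟩ hB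
          rw [← sub_div, norm_div, norm_pow, div_eq_mul_inv]
          have : ‖μ₁ ζ - μ₂ ζ‖ ≤ 2 := (norm_sub_le _ _).trans (by linarith [hb₁ ζ, hb₂ ζ])
          gcongr
      _ ≤ ∫ ζ, 2 * (kerS h z ζ + kerR t z ζ + kerR d₁ z ζ + kerR d₂ z ζ) := by
          apply setIntegral_le_integral hI
          refine Eventually.of_forall fun ζ => ?_
          have n1 := kerS_nonneg h hz ζ
          have n2 := kerR_nonneg ht z ζ
          have n3 := kerR_nonneg p1 z ζ
          have n4 := kerR_nonneg p2 z ζ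
          simp only [Pi.zero_apply]
          linarith
      _ = _ := by
          have i1 := kerS_integrable h hz
          have i2 := kerR_integrable ht z
          have i3 := kerR_integrable p1 z
          have i4 := kerR_integrable p2 z
          rw [integral_const_mul,
            integral_add (f := fun a => kerS h z a + kerR t z a + kerR d₁ z a) ((i1.add i2).add i3) i4,
            integral_add (f := fun a => kerS h z a + kerR t z a) (i1.add i2) i3,
            integral_add i1 i2, kerS_integral hh.le hz, kerR_integral ht, kerR_integral p1,
            kerR_integral p2]
  rw [integral_sub (T_int hm₁ hb₁ hz) (T_int hm₂ hb₂ hz)] at key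
  unfold Tderiv
  rw [← mul_sub, norm_mul, norm_two_pi]
  have hp := Real.pi_pos
  calc _ ≤ 2 / Real.pi * (2 * (Real.pi * h / z.im ^ 2 + 2 * Real.pi / t + 2 * Real.pi / d₁
        + 2 * Real.pi / d₂)) := by gcongr
    _ = _ := by field_simp; ring

lemma div_max_le {y d : ℝ} (hy : 0 < y) (hd : 0 < d) :
    8 / max d y ≤ 8 * (d ^ (-(1/2) : ℝ) * y ^ (-(1/2) : ℝ)) := by
  have h1 : 0 < max d y := lt_max_of_lt_right hy
  have hdd : (max d y) ^ (1/2 : ℝ) * (max d y) ^ (1/2 : ℝ) = max d y := by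
    rw [← Real.rpow_add h1]; norm_num
  have : d ^ (1/2 : ℝ) * y ^ (1/2 : ℝ) ≤ max d y := by
    calc _ ≤ (max d y) ^ (1/2 : ℝ) * (max d y) ^ (1/2 : ℝ) := by
          gcongr
          · exact le_max_left _ _
          · exact le_max_right _ _
      _ = _ := hdd
  rw [Real.rpow_neg hd.le, Real.rpow_neg hy.le, ← mul_inv, ← div_eq_mul_inv]
  gcongr

lemma Fd_diff {μ₁ μ₂ : ℂ → ℂ} (hm₁ : Measurable μ₁) (hm₂ : Measurable μ₂) (hb₁ : ∀ ζ, ‖μ₁ ζ‖ ≤ 1)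
    (hb₂ : ∀ ζ, ‖μ₂ ζ‖ ≤ 1) {x₀ W h t : ℝ} (hh : 0 < h) (ht : 0 < t)
    (heq : ∀ ζ : ℂ, ζ.re ∈ Ioo x₀ (x₀ + W) → -ζ.im ∈ Ioo h t → μ₁ ζ = μ₂ ζ)
    {z : ℂ} (hz : 0 < z.im) (hx : z.re ∈ Ioo x₀ (x₀ + W)) :
    Fd μ₁ z ≤ Fd μ₂ z + 32 * (1 * (4 * h * z.im ^ (-2 : ℝ) + 8 / t)
      + ((z.re - x₀) ^ (-(1/2) : ℝ) + (x₀ + W - z.re) ^ (-(1/2) : ℝ))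
        * (8 * z.im ^ (-(1/2) : ℝ))) := by
  have h1 := T_diff hm₁ hm₂ hb₁ hb₂ hh ht heq hz
  have h2 := div_max_le hz (sub_pos.2 hx.1)
  have h3 := div_max_le hz (sub_pos.2 hx.2)
  set y := z.im with hy
  have e : 4 * h / y ^ 2 = 4 * h * y ^ (-2 : ℝ) := by
    rw [Real.rpow_neg hz.le]; norm_cast
  rw [e] at h1
  have b1 := T_bound hb₁ hz
  have b2 := T_bound hb₂ hz
  have tri := norm_sub_norm_le (Tderiv μ₁ z) (Tderiv μ₂ z)
  rw [← hy] at b1 b2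
  unfold Fd
  rw [← hy]
  set A := ‖Tderiv μ₁ z‖
  set B := ‖Tderiv μ₂ z‖
  set D := ‖Tderiv μ₁ z - Tderiv μ₂ z‖
  have hA : 0 ≤ A := norm_nonneg _
  have hB : 0 ≤ B := norm_nonneg _
  have hD : 0 ≤ D := norm_nonneg _
  have main : (2 * y * A)^2 / y - (2 * y * B)^2 / y ≤ 32 * D := by
    have : (2 * y * A)^2 / y - (2 * y * B)^2 / y = 4 * (y * A + y * B) * (A - B) := by
      field_simp; ring
    rw [this]
    have s : 0 ≤ y * A + y * B := by positivity
    calc _ ≤ 4 * (y * A + y * B) * D := by gcongr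
      _ ≤ 4 * (4 + 4) * D := by gcongr
      _ = _ := by ring
  linarith


lemma Q_meas (a b c d : ℝ) : MeasurableSet (Ioo a b ×ℂ Ioo c d) :=
  reProdIm_meas measurableSet_Ioo measurableSet_Ioo

lemma Fd_intOn {μ : ℂ → ℂ} (hm : Measurable μ) (hb : ∀ ζ, ‖μ ζ‖ ≤ 1) {a b c d : ℝ} (hc : 0 < c) :
    IntegrableOn (Fd μ) (Icc a b ×ℂ Icc c d) := by
  apply ContinuousOn.integrableOn_compact
  · exact IsCompact.reProdIm isCompact_Icc isCompact_Icc
  · apply (Fd_contOn hm hb).mono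
    intro z hz
    exact lt_of_lt_of_le hc hz.2.1

lemma Fd_intOn_Q {μ : ℂ → ℂ} (hm : Measurable μ) (hb : ∀ ζ, ‖μ ζ‖ ≤ 1) {a b c d : ℝ} (hc : 0 < c) :
    IntegrableOn (Fd μ) (Ioo a b ×ℂ Ioo c d) :=
  (Fd_intOn hm hb hc (a := a) (b := b) (d := d)).mono_set
    (fun _ hz => ⟨Ioo_subset_Icc_self hz.1, Ioo_subset_Icc_self hz.2⟩)

lemma half_int (x₀ : ℝ) {W : ℝ} (hW : 0 < W) :
    IntegrableOn (fun x : ℝ => (x - x₀) ^ (-(1/2) : ℝ)) (Ioo x₀ (x₀ + W)) ∧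
    ∫ x in Ioo x₀ (x₀ + W), (x - x₀) ^ (-(1/2) : ℝ) = 2 * W ^ (1/2 : ℝ) := by
  have h := intervalIntegral.intervalIntegrable_rpow' (a := 0) (b := W) (r := -(1/2)) (by norm_num)
  have h1 := h.comp_sub_right x₀
  rw [intervalIntegrable_iff_integrableOn_Ioo_of_le (by linarith)] at h1
  rw [zero_add, add_comm W] at h1
  refine ⟨h1, ?_⟩
  rw [← integral_Ioc_eq_integral_Ioo, ← intervalIntegral.integral_of_le (by linarith),
    intervalIntegral.integral_comp_sub_right (fun x => x ^ (-(1/2) : ℝ)), integral_rpow (by norm_num)]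
  norm_num
  ring

lemma half_int' (x₀ : ℝ) {W : ℝ} (hW : 0 < W) :
    IntegrableOn (fun x : ℝ => (x₀ + W - x) ^ (-(1/2) : ℝ)) (Ioo x₀ (x₀ + W)) ∧
    ∫ x in Ioo x₀ (x₀ + W), (x₀ + W - x) ^ (-(1/2) : ℝ) = 2 * W ^ (1/2 : ℝ) := by
  have h := intervalIntegral.intervalIntegrable_rpow' (a := 0) (b := W) (r := -(1/2)) (by norm_num)
  have h1 := h.comp_sub_left (x₀ + W)
  have h1 := h1.symm
  rw [intervalIntegrable_iff_integrableOn_Ioo_of_le (by linarith)] at h1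
  rw [sub_zero, add_sub_cancel_right] at h1
  refine ⟨h1, ?_⟩
  rw [← integral_Ioc_eq_integral_Ioo, ← intervalIntegral.integral_of_le (by linarith),
    intervalIntegral.integral_comp_sub_left (fun x => x ^ (-(1/2) : ℝ)), integral_rpow (by norm_num)]
  norm_num
  ring

lemma rpow_int (r : ℝ) {h t : ℝ} (hh : 0 < h) (ht : h < t) :
    IntegrableOn (fun y : ℝ => y ^ r) (Ioo h t) := by
  apply IntegrableOn.mono_set _ Ioo_subset_Icc_self
  apply ContinuousOn.integrableOn_compact isCompact_Icc
  intro y hy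
  exact (Real.continuousAt_rpow_const y r (Or.inl (by have := hy.1; linarith))).continuousWithinAt

lemma Fd_err {μ₁ μ₂ : ℂ → ℂ} (hm₁ : Measurable μ₁) (hm₂ : Measurable μ₂) (hb₁ : ∀ ζ, ‖μ₁ ζ‖ ≤ 1)
    (hb₂ : ∀ ζ, ‖μ₂ ζ‖ ≤ 1) {x₀ W h t : ℝ} (hh : 0 < h) (ht : h < t) (hW : t ≤ W)
    (heq : ∀ ζ : ℂ, ζ.re ∈ Ioo x₀ (x₀ + W) → -ζ.im ∈ Ioo h t → μ₁ ζ = μ₂ ζ) :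
    ∫ z in Ioo x₀ (x₀ + W) ×ℂ Ioo h t, Fd μ₁ z
      ≤ (∫ z in Ioo x₀ (x₀ + W) ×ℂ Ioo h t, Fd μ₂ z) + 2432 * W := by
  have t0 : 0 < t := hh.trans ht
  have W0 : 0 < W := t0.trans_le hW
  obtain ⟨a1, a2⟩ := half_int x₀ W0
  obtain ⟨b1, b2⟩ := half_int' x₀ W0
  have c1 := rpow_int (-2) hh ht
  have c2 := rpow_int (-(1/2)) hh ht
  have I1 : IntegrableOn (fun z : ℂ => (1:ℝ) * (4 * h * z.im ^ (-2 : ℝ) + 8 / t))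
      (Ioo x₀ (x₀ + W) ×ℂ Ioo h t) :=
    prod_integrableOn (f := fun _ => 1) (g := fun y => 4 * h * y ^ (-2 : ℝ) + 8 / t) (by simp)
      (Integrable.add (c1.const_mul _) (by simp))
  have I2 : IntegrableOn (fun z : ℂ => ((z.re - x₀) ^ (-(1/2) : ℝ) + (x₀ + W - z.re) ^ (-(1/2) : ℝ))
        * (8 * z.im ^ (-(1/2) : ℝ))) (Ioo x₀ (x₀ + W) ×ℂ Ioo h t) :=
    prod_integrableOn (f := fun x => (x - x₀) ^ (-(1/2) : ℝ) + (x₀ + W - x) ^ (-(1/2) : ℝ))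
      (g := fun y => 8 * y ^ (-(1/2) : ℝ)) (a1.add b1) (c2.const_mul _)
  have J1 : ∫ z in Ioo x₀ (x₀ + W) ×ℂ Ioo h t, (1:ℝ) * (4 * h * z.im ^ (-2 : ℝ) + 8 / t) ≤ 12 * W := by
    rw [prod_integral (fun _ => 1) (fun y => 4 * h * y ^ (-2 : ℝ) + 8 / t)]
    rw [integral_add (c1.const_mul _) (by simp), integral_const_mul]
    rw [← integral_Ioc_eq_integral_Ioo (f := fun y : ℝ => y ^ (-2 : ℝ)),
      ← intervalIntegral.integral_of_le ht.le, integral_rpow (by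
        right; refine ⟨by norm_num, ?_⟩; rw [uIcc_of_le ht.le]; intro h0; linarith [h0.1])]
    simp [Measure.real, W0.le, ht.le]
    norm_num
    rw [Real.rpow_neg_one, Real.rpow_neg_one]
    have : W * (4 * h * ((t⁻¹ - h⁻¹) / -1) + (t - h) * (8 / t))
        = 12 * W - 12 * W * (h / t) := by field_simp; ring
    have e2 : 0 ≤ 12 * W * (h / t) := by positivity
    linarith
  have J2 : ∫ z in Ioo x₀ (x₀ + W) ×ℂ Ioo h t,
      ((z.re - x₀) ^ (-(1/2) : ℝ) + (x₀ + W - z.re) ^ (-(1/2) : ℝ))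
        * (8 * z.im ^ (-(1/2) : ℝ)) ≤ 64 * W := by
    rw [prod_integral (fun x => (x - x₀) ^ (-(1/2) : ℝ) + (x₀ + W - x) ^ (-(1/2) : ℝ))
      (fun y => 8 * y ^ (-(1/2) : ℝ)), integral_add a1 b1, a2, b2, integral_const_mul,
      ← integral_Ioc_eq_integral_Ioo (f := fun y : ℝ => y ^ (-(1/2) : ℝ)),
      ← intervalIntegral.integral_of_le ht.le, integral_rpow (by left; norm_num)]
    have e : (-(1/2) + 1 : ℝ) = 1/2 := by norm_num
    rw [e]
    have q1 : W ^ (1/2 : ℝ) * W ^ (1/2 : ℝ) = W := by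
      rw [← Real.rpow_add W0]; norm_num
    have q2 : t ^ (1/2 : ℝ) ≤ W ^ (1/2 : ℝ) := by gcongr
    have q3 : 0 ≤ h ^ (1/2 : ℝ) := by positivity
    have q4 : 0 ≤ W ^ (1/2 : ℝ) := by positivity
    nlinarith [mul_le_mul_of_nonneg_left q2 q4, mul_nonneg q3 q4]
  have hmono : ∫ z in Ioo x₀ (x₀ + W) ×ℂ Ioo h t, Fd μ₁ z ≤
      ∫ z in Ioo x₀ (x₀ + W) ×ℂ Ioo h t, (Fd μ₂ z + 32 * (1 * (4 * h * z.im ^ (-2 : ℝ) + 8 / t)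
      + ((z.re - x₀) ^ (-(1/2) : ℝ) + (x₀ + W - z.re) ^ (-(1/2) : ℝ))
        * (8 * z.im ^ (-(1/2) : ℝ)))) := by
    apply setIntegral_mono_on (Fd_intOn_Q hm₁ hb₁ hh)
      (Integrable.add (Fd_intOn_Q hm₂ hb₂ hh) ((I1.add I2).const_mul 32)) (Q_meas _ _ _ _)
    intro z hz
    exact Fd_diff hm₁ hm₂ hb₁ hb₂ hh t0 heq (hh.trans hz.2.1) hz.1
  have I3 : IntegrableOn (fun z : ℂ => 32 * (1 * (4 * h * z.im ^ (-2 : ℝ) + 8 / t)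
      + ((z.re - x₀) ^ (-(1/2) : ℝ) + (x₀ + W - z.re) ^ (-(1/2) : ℝ))
        * (8 * z.im ^ (-(1/2) : ℝ)))) (Ioo x₀ (x₀ + W) ×ℂ Ioo h t) := (I1.add I2).const_mul 32
  rw [integral_add (Fd_intOn_Q hm₂ hb₂ hh) I3, integral_const_mul,
    integral_add I1 I2] at hmono
  linarith


lemma rect_int {E : Type*} [NormedAddCommGroup E] [NormedSpace ℝ E]
    {f : ℂ → E} {a b c d : ℝ} (hab : a ≤ b) (hcd : c ≤ d)
    (hf : ContinuousOn f (Icc a b ×ℂ Icc c d)) :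
    IntervalIntegrable (fun x : ℝ => ∫ s in c..d, f (x + s * I)) volume a b ∧
    ∫ z in Icc a b ×ℂ Icc c d, f z = ∫ x in a..b, ∫ s in c..d, f (x + s * I) := by
  have hi : IntegrableOn f (Icc a b ×ℂ Icc c d) :=
    hf.integrableOn_compact (IsCompact.reProdIm isCompact_Icc isCompact_Icc)
  have hp : IntegrableOn (fun p : ℝ × ℝ => f (p.1 + p.2 * I)) (Icc a b ×ˢ Icc c d)
      (volume.prod volume) := by
    refine (Complex.volume_preserving_equiv_real_prod.integrableOn_comp_preimage
      (Complex.measurableEquivRealProd.measurableEmbedding)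
      (f := fun p : ℝ × ℝ => f (p.1 + p.2 * I)) (s := Icc a b ×ˢ Icc c d)).1 ?_
    refine IntegrableOn.congr_fun hi ?_ (reProdIm_meas measurableSet_Icc measurableSet_Icc)
    intro z _
    simp [Complex.measurableEquivRealProd_apply, Complex.re_add_im]
  have e : ∫ z in Icc a b ×ℂ Icc c d, f z = ∫ p in Icc a b ×ˢ Icc c d, f ((p.1 : ℂ) + p.2 * I)
      ∂(volume.prod volume : Measure (ℝ × ℝ)) := by
    have := Complex.volume_preserving_equiv_real_prod.setIntegral_preimage_emb
      (Complex.measurableEquivRealProd.measurableEmbedding)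
      (fun p : ℝ × ℝ => f (p.1 + p.2 * I)) (Icc a b ×ˢ Icc c d)
    refine Eq.trans ?_ this
    refine setIntegral_congr_fun (reProdIm_meas measurableSet_Icc measurableSet_Icc) ?_
    intro z _
    simp [Complex.measurableEquivRealProd_apply, Complex.re_add_im]
  have hh : ∀ x : ℝ, ∫ s in c..d, f (x + s * I) = ∫ s in Icc c d, f (x + s * I) := by
    intro x
    rw [intervalIntegral.integral_of_le hcd, integral_Icc_eq_integral_Ioc]
  constructor
  · rw [intervalIntegrable_iff_integrableOn_Icc_of_le hab]
    simp_rw [hh]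
    rw [IntegrableOn, ← Measure.prod_restrict] at hp
    exact hp.integral_prod_left
  · rw [e, setIntegral_prod _ hp, intervalIntegral.integral_of_le hab, integral_Icc_eq_integral_Ioc]
    simp_rw [hh]

section green
variable {b g g' : ℂ → ℂ}

lemma green_fderiv (hb : ∀ z : ℂ, 0 < z.im → HasDerivAt b (g z) z)
    (hg : ∀ z : ℂ, 0 < z.im → HasDerivAt g (g' z) z) (y : ℝ) {z : ℂ} (hz : 0 < z.im) :
    DifferentiableAt ℝ (fun z : ℂ => ((z.im - y : ℝ) : ℂ) * (g z * (starRingEnd ℂ) (b z))) z ∧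
    I • fderiv ℝ (fun z : ℂ => ((z.im - y : ℝ) : ℂ) * (g z * (starRingEnd ℂ) (b z))) z 1
      - fderiv ℝ (fun z : ℂ => ((z.im - y : ℝ) : ℂ) * (g z * (starRingEnd ℂ) (b z))) z I
      = 2 * I * ((z.im - y) * ‖g z‖^2 : ℝ) - g z * (starRingEnd ℂ) (b z) := by
  have d1 : HasFDerivAt (fun z : ℂ => ((z.im - y : ℝ) : ℂ)) (Complex.ofRealCLM.comp Complex.imCLM) z :=
    Complex.ofRealCLM.hasFDerivAt.comp z (Complex.imCLM.hasFDerivAt.sub_const y)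
  have d2 := (hg z hz).hasFDerivAt.restrictScalars ℝ
  have d3 : HasFDerivAt (fun z => (starRingEnd ℂ) (b z)) _ z :=
    (Complex.conjCLE : ℂ →L[ℝ] ℂ).hasFDerivAt.comp z ((hb z hz).hasFDerivAt.restrictScalars ℝ)
  have d := d1.mul (d2.mul d3)
  refine ⟨d.differentiableAt, ?_⟩
  have d' := d.fderiv
  have : (fun z : ℂ => ((z.im - y : ℝ) : ℂ) * (g z * (starRingEnd ℂ) (b z)))
    = (fun z : ℂ => ((z.im - y : ℝ) : ℂ)) * (g * fun z => (starRingEnd ℂ) (b z)) := rfl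
  rw [this, d']
  have hn : ((‖g z‖^2 : ℝ) : ℂ) = g z * (starRingEnd ℂ) (g z) := by
    rw [Complex.mul_conj, Complex.normSq_eq_norm_sq]
  rw [ofReal_mul, hn]
  simp
  ring_nf

lemma side_growth (hb : ∀ z : ℂ, 0 < z.im → HasDerivAt b (g z) z)
    (hgc : ContinuousOn g {z | 0 < z.im})
    (hB : ∀ z : ℂ, 0 < z.im → z.im * ‖g z‖ ≤ 4) (x : ℝ) {s : ℝ} (hs : 0 < s) (hs1 : s ≤ 1) :
    ‖b (x + s * I)‖ ≤ ‖b (x + (1:ℝ) * I)‖ + 4 * (- Real.log s) := by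
  have hpos : ∀ u ∈ uIcc s 1, 0 < u := by
    intro u hu; rw [uIcc_of_le hs1] at hu; exact hs.trans_le hu.1
  have hd : ∀ u ∈ uIcc s 1, HasDerivAt (fun u : ℝ => b (x + u * I)) (g (x + u * I) * I) u := by
    intro u hu
    have h1 : HasDerivAt (fun u : ℂ => (x : ℂ) + u * I) I (u : ℂ) := by
      simpa using ((hasDerivAt_id (u : ℂ)).mul_const I).const_add (x : ℂ)
    exact ((hb (x + u * I) (by simpa using hpos u hu)).comp (u : ℂ) h1).comp_ofReal
  have hc : ContinuousOn (fun u : ℝ => g (x + u * I) * I) (uIcc s 1) := by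
    apply ContinuousOn.mul _ continuousOn_const
    apply hgc.comp (by fun_prop)
    intro u hu
    simpa using hpos u hu
  have ftc := intervalIntegral.integral_eq_sub_of_hasDerivAt hd hc.intervalIntegrable
  have hbd : ‖∫ u in s..1, g (x + u * I) * I‖ ≤ ∫ u in s..1, 4 * u⁻¹ := by
    apply intervalIntegral.norm_integral_le_of_norm_le hs1
    · refine Eventually.of_forall fun u hu => ?_
      have hu0 : 0 < u := hs.trans hu.1
      have := hB (x + u * I) (by simpa using hu0)
      rw [norm_mul, norm_I, mul_one]
      simp only [add_im, ofReal_im, mul_im, ofReal_re, I_im, mul_one, I_re, mul_zero, add_zero,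
        zero_add] at this
      rw [← div_eq_mul_inv, le_div_iff₀ hu0]; linarith
    · apply ContinuousOn.intervalIntegrable
      apply ContinuousOn.mul continuousOn_const
      exact continuousOn_inv₀.mono fun u hu => (hpos u hu).ne'
  rw [intervalIntegral.integral_const_mul, integral_inv_of_pos hs one_pos, ftc] at hbd
  rw [one_div, Real.log_inv] at hbd
  have := norm_sub_norm_le (b (x + s * I)) (b (x + (1:ℝ) * I))
  rw [norm_sub_rev] at this
  linarith

lemma side_int (hb : ∀ z : ℂ, 0 < z.im → HasDerivAt b (g z) z)
    (hgc : ContinuousOn g {z | 0 < z.im})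
    (hB : ∀ z : ℂ, 0 < z.im → z.im * ‖g z‖ ≤ 4) (x : ℝ) {y : ℝ} (hy : 0 < y) (hy1 : y ≤ 1) :
    ‖∫ s in y..1, ((s - y : ℝ) : ℂ) * (g (x + s * I) * (starRingEnd ℂ) (b (x + s * I)))‖
      ≤ 4 * ‖b (x + (1:ℝ) * I)‖ + 16 := by
  set M := ‖b (x + (1:ℝ) * I)‖ with hM
  have hM0 : 0 ≤ M := norm_nonneg _
  calc _ ≤ ∫ s in y..1, (4 * M + (-16) * Real.log s) := by
        apply intervalIntegral.norm_integral_le_of_norm_le hy1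
        · refine Eventually.of_forall fun s hs => ?_
          have hs0 : 0 < s := hy.trans hs.1
          have h1 := hB (x + s * I) (by simpa using hs0)
          simp only [add_im, ofReal_im, mul_im, ofReal_re, I_im, mul_one, I_re, mul_zero, add_zero,
            zero_add] at h1
          have h2 := side_growth hb hgc hB x hs0 hs.2
          rw [norm_mul, norm_mul, Complex.norm_real, RCLike.norm_conj,
            Real.norm_of_nonneg (by linarith [hs.1])]
          calc _ ≤ s * (‖g (x + s * I)‖ * (M + 4 * (- Real.log s))) := by
                gcongr; linarith
            _ = (s * ‖g (x + s * I)‖) * (M + 4 * (- Real.log s)) := by ring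
            _ ≤ 4 * (M + 4 * (- Real.log s)) := by
                gcongr
                exact (norm_nonneg _).trans h2
            _ = _ := by ring
        · exact (by simp : IntervalIntegrable (fun _ : ℝ => 4 * M) volume y 1).add
            (intervalIntegral.intervalIntegrable_log'.const_mul _)
    _ = (1 - y) * (4 * M) + (-16) * (-(y * Real.log y) - 1 + y) := by
        rw [intervalIntegral.integral_add (by simp)
          (intervalIntegral.intervalIntegrable_log'.const_mul _), intervalIntegral.integral_const,
          intervalIntegral.integral_const_mul,
          integral_log]
        simp
    _ ≤ _ := by
        have := Real.log_nonpos hy.le hy1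
        nlinarith [mul_nonneg hy.le (neg_nonneg.2 this), mul_nonneg hy.le hM0]
end green


lemma green_inner {b g : ℂ → ℂ} (hb : ∀ z : ℂ, 0 < z.im → HasDerivAt b (g z) z)
    (hgc : ContinuousOn g {z | 0 < z.im}) (x : ℝ) {y : ℝ} (hy : 0 < y) (hy1 : y ≤ 1) :
    ∫ s in y..1, -2 * (g (x + s * I) * (starRingEnd ℂ) (b (x + s * I))).im
      = ‖b (x + (1:ℝ) * I)‖^2 - ‖b (x + y * I)‖^2 := by
  have hpos : ∀ u ∈ uIcc y 1, 0 < u := by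
    intro u hu; rw [uIcc_of_le hy1] at hu; exact hy.trans_le hu.1
  have hbc : ContinuousOn b {z | 0 < z.im} := fun z hz => (hb z hz).continuousAt.continuousWithinAt
  have hd : ∀ u ∈ uIcc y 1, HasDerivAt (fun u : ℝ => ‖b (x + u * I)‖^2)
      (-2 * (g (x + u * I) * (starRingEnd ℂ) (b (x + u * I))).im) u := by
    intro u hu
    have h1 : HasDerivAt (fun u : ℂ => (x : ℂ) + u * I) I (u : ℂ) := by
      simpa using ((hasDerivAt_id (u : ℂ)).mul_const I).const_add (x : ℂ)
    have h2 : HasDerivAt (fun u : ℝ => b (x + u * I)) (g (x + u * I) * I) u :=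
      ((hb (x + u * I) (by simpa using hpos u hu)).comp (u : ℂ) h1).comp_ofReal
    have h3 := h2.norm_sq
    refine h3.congr_deriv ?_
    rw [Complex.inner]
    simp
    ring
  have hmap : ∀ f : ℂ → ℂ, ContinuousOn f {z | 0 < z.im} →
      ContinuousOn (fun s : ℝ => f (x + s * I)) (uIcc y 1) := by
    intro f hf
    apply hf.comp (by fun_prop)
    intro u hu
    simpa using hpos u hu
  have hc : ContinuousOn (fun s : ℝ => -2 * (g (x + s * I) * (starRingEnd ℂ) (b (x + s * I))).im)
      (uIcc y 1) := by
    apply continuousOn_const.mul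
    apply Complex.continuous_im.comp_continuousOn
    exact (hmap g hgc).mul (Complex.continuous_conj.comp_continuousOn (hmap b hbc))
  exact intervalIntegral.integral_eq_sub_of_hasDerivAt hd hc.intervalIntegrable

lemma im_intervalIntegral {f : ℝ → ℂ} {a b : ℝ} (hf : IntervalIntegrable f volume a b) :
    (∫ x in a..b, f x).im = ∫ x in a..b, (f x).im := by
  have := Complex.imCLM.intervalIntegral_comp_comm hf
  simpa using this.symm

lemma green {b g : ℂ → ℂ} (hb : ∀ z : ℂ, 0 < z.im → HasDerivAt b (g z) z)
    (hB : ∀ z : ℂ, 0 < z.im → z.im * ‖g z‖ ≤ 4) :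
    ∃ K : ℝ, ∀ y : ℝ, 0 < y → y < 1 →
      |(∫ x in (0:ℝ)..1, ‖b (x + y * I)‖^2)
        - ∫ z in Icc (0:ℝ) 1 ×ℂ Icc y 1, (2 * z.im * ‖g z‖)^2 / z.im| ≤ K := by
  have hopen : IsOpen {z : ℂ | 0 < z.im} := isOpen_lt continuous_const Complex.continuous_im
  have hbd : DifferentiableOn ℂ b {z : ℂ | 0 < z.im} :=
    fun z hz => (hb z hz).differentiableAt.differentiableWithinAt
  have hgd : ∀ z : ℂ, 0 < z.im → HasDerivAt g (deriv g z) z := by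
    intro z hz
    have h1 : DifferentiableAt ℂ (deriv b) z := (hbd.deriv hopen).differentiableAt (hopen.mem_nhds hz)
    have h2 : g =ᶠ[𝓝 z] deriv b := by
      filter_upwards [hopen.mem_nhds hz] with w hw
      exact (hb w hw).deriv.symm
    exact (h1.congr_of_eventuallyEq h2).hasDerivAt
  have hbc : ContinuousOn b {z | 0 < z.im} := hbd.continuousOn
  have hgc : ContinuousOn g {z | 0 < z.im} :=
    fun z hz => (hgd z hz).continuousAt.continuousWithinAt
  -- bound on the top side
  have htop : ContinuousOn (fun x : ℝ => ‖b (x + (1:ℝ) * I)‖) (Icc 0 1) := by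
    apply ContinuousOn.norm
    apply hbc.comp (by fun_prop)
    intro x _
    simp
  obtain ⟨M, hM⟩ := isCompact_Icc.exists_bound_of_continuousOn htop
  have hM' : ∀ x ∈ Icc (0:ℝ) 1, ‖b (x + (1:ℝ) * I)‖ ≤ M := by
    intro x hx; have := hM x hx; rwa [norm_norm] at this
  have hM0 : 0 ≤ M := (norm_nonneg _).trans (hM' 0 (by simp))
  refine ⟨M^2 + 2 * (4 * M + (4 * M + 16) + (4 * M + 16)) + 64, ?_⟩
  intro y hy hy1
  set R : Set ℂ := Icc (0:ℝ) 1 ×ℂ Icc y 1 with hR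
  have hRpos : ∀ z ∈ R, 0 < z.im := fun z hz => hy.trans_le hz.2.1
  have hRsub : R ⊆ {z | 0 < z.im} := hRpos
  have hRc : IsCompact R := IsCompact.reProdIm isCompact_Icc isCompact_Icc
  have hRm : MeasurableSet R := reProdIm_meas measurableSet_Icc measurableSet_Icc
  set f : ℂ → ℂ := fun z : ℂ => ((z.im - y : ℝ) : ℂ) * (g z * (starRingEnd ℂ) (b z)) with hf
  set E : ℂ → ℂ := fun z => 2 * I * ((z.im - y) * ‖g z‖^2 : ℝ) - g z * (starRingEnd ℂ) (b z) with hE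
  have hEc : ContinuousOn E R := by
    have c1 := hgc.mono hRsub
    have c2 := hbc.mono hRsub
    apply ContinuousOn.sub
    · apply continuousOn_const.mul
      apply Complex.continuous_ofReal.comp_continuousOn
      exact (Complex.continuous_im.continuousOn.sub continuousOn_const).mul (c1.norm.pow 2)
    · exact c1.mul (Complex.continuous_conj.comp_continuousOn c2)
  have huR : (uIcc (y * I : ℂ).re (1 + I : ℂ).re ×ℂ uIcc (y * I : ℂ).im (1 + I : ℂ).im) = R := by
    simp [uIcc_of_le hy1.le, hR]
  have rect := Complex.integral_boundary_rect_of_differentiableOn_real f (y * I) (1 + I)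
    (by
      rw [huR]
      intro z hz
      exact (green_fderiv hb hgd y (hRpos z hz)).1.differentiableWithinAt)
    (by
      rw [huR]
      refine (hEc.integrableOn_compact hRc).congr_fun ?_ hRm
      intro z hz
      exact (green_fderiv hb hgd y (hRpos z hz)).2.symm)
  simp only [mul_re, ofReal_re, I_re, mul_zero, ofReal_im, I_im, mul_one, sub_self, add_re, one_re,
    add_zero, mul_im, zero_add, add_im, one_im, zero_mul, sub_zero] at rect
  have rhs : ∫ x : ℝ in (0:ℝ)..1, ∫ s : ℝ in y..1, I • fderiv ℝ f (x + s * I) 1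
      - fderiv ℝ f (x + s * I) I = ∫ x : ℝ in (0:ℝ)..1, ∫ s : ℝ in y..1, E (x + s * I) := by
    apply intervalIntegral.integral_congr
    intro x hx
    apply intervalIntegral.integral_congr
    intro s hs
    rw [uIcc_of_le hy1.le] at hs
    exact (green_fderiv hb hgd y (by simpa using hy.trans_le hs.1)).2
  rw [rhs] at rect
  obtain ⟨Eint, Eeq⟩ := rect_int zero_le_one hy1.le hEc
  -- the area term
  set A : ℂ → ℝ := fun z => (z.im - y) * ‖g z‖^2 with hA
  have hAc : ContinuousOn A R :=
    (Complex.continuous_im.continuousOn.sub continuousOn_const).mul ((hgc.mono hRsub).norm.pow 2)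
  obtain ⟨Aint, Aeq⟩ := rect_int zero_le_one hy1.le hAc
  have line : ∀ {F : Type} [NormedAddCommGroup F] (u : ℂ → F) (_ : ContinuousOn u R) (x : ℝ),
      x ∈ Icc (0:ℝ) 1 → IntervalIntegrable (fun s : ℝ => u (x + s * I)) volume y 1 := by
    intro F _ u hu x hx
    apply ContinuousOn.intervalIntegrable
    rw [uIcc_of_le hy1.le]
    apply hu.comp (by fun_prop)
    intro s hs
    exact ⟨by simpa using hx, by simpa using hs⟩
  have bint : ∀ c : ℝ, 0 < c → IntervalIntegrable (fun x : ℝ => ‖b (x + c * I)‖^2) volume 0 1 := by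
    intro c hc
    apply ContinuousOn.intervalIntegrable
    apply ContinuousOn.pow
    apply ContinuousOn.norm
    apply hbc.comp (by fun_prop)
    intro x _
    simpa using hc
  have hcross : ContinuousOn (fun z => -2 * (g z * (starRingEnd ℂ) (b z)).im) R := by
    apply continuousOn_const.mul
    apply Complex.continuous_im.comp_continuousOn
    exact (hgc.mono hRsub).mul (Complex.continuous_conj.comp_continuousOn (hbc.mono hRsub))
  have imE : (∫ x : ℝ in (0:ℝ)..1, ∫ s : ℝ in y..1, E (x + s * I)).im
      = 2 * (∫ z in R, A z) + (1/2) * ((∫ x in (0:ℝ)..1, ‖b (x + (1:ℝ) * I)‖^2)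
        - ∫ x in (0:ℝ)..1, ‖b (x + y * I)‖^2) := by
    rw [im_intervalIntegral Eint, Aeq, ← intervalIntegral.integral_const_mul,
      ← intervalIntegral.integral_sub (bint 1 one_pos) (bint y hy),
      ← intervalIntegral.integral_const_mul, ← intervalIntegral.integral_add (Aint.const_mul 2)
        (((bint 1 one_pos).sub (bint y hy)).const_mul _)]
    apply intervalIntegral.integral_congr
    intro x hx
    rw [uIcc_of_le zero_le_one] at hx
    simp only []
    rw [im_intervalIntegral (line E hEc x hx), ← green_inner hb hgc x hy hy1.le,
      ← intervalIntegral.integral_const_mul, ← intervalIntegral.integral_const_mul,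
      ← intervalIntegral.integral_add ((line A hAc x hx).const_mul 2)
        ((line _ hcross x hx).const_mul (1/2))]
    apply intervalIntegral.integral_congr
    intro s hs
    simp only [hE, hA, sub_im, mul_im, I_im, I_re, ofReal_re, ofReal_im, mul_re, re_ofNat, im_ofNat]
    ring
  -- boundary terms
  have hbot : ∫ x : ℝ in (0:ℝ)..1, f (x + y * I) = 0 := by
    have : ∀ x : ℝ, f (x + y * I) = 0 := by intro x; simp [hf]
    simp [this]
  have htopI : ‖∫ x : ℝ in (0:ℝ)..1, f (x + (1:ℝ) * I)‖ ≤ 4 * M := by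
    have := intervalIntegral.norm_integral_le_of_norm_le_const (a := (0:ℝ)) (b := 1) (C := 4 * M)
      (f := fun x : ℝ => f (x + (1:ℝ) * I)) (by
        intro x hx
        rw [uIoc_of_le zero_le_one] at hx
        have h1 := hM' x ⟨hx.1.le, hx.2⟩
        have h2 := hB (x + (1:ℝ) * I) (by simp)
        have e : ((x : ℂ) + (1:ℝ) * I).im = 1 := by simp
        rw [e, one_mul] at h2
        simp only [hf]
        rw [e, norm_mul, norm_mul, RCLike.norm_conj, Complex.norm_real,
          Real.norm_of_nonneg (by linarith)]
        calc _ ≤ 1 * (4 * M) := by gcongr; linarith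
          _ = _ := one_mul _)
    simpa using this
  have hside : ∀ x : ℝ, x ∈ Icc (0:ℝ) 1 → ‖∫ s : ℝ in y..1, f (x + s * I)‖ ≤ 4 * M + 16 := by
    intro x hx
    have := side_int hb hgc hB x hy hy1.le
    have h1 := hM' x hx
    have e : ∀ s : ℝ, f (x + s * I)
        = ((s - y : ℝ) : ℂ) * (g (x + s * I) * (starRingEnd ℂ) (b (x + s * I))) := by
      intro s; simp [hf]
    simp_rw [e]
    linarith
  have hLHS := congrArg Complex.im rect
  rw [imE, hbot] at hLHS
  have s1 := hside 1 (by simp)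
  have s0 := hside 0 (by simp)
  have a1 := Complex.abs_im_le_norm (∫ x : ℝ in (0:ℝ)..1, f (x + (1:ℝ) * I))
  have a2 := Complex.abs_re_le_norm (∫ s : ℝ in y..1, f ((1:ℝ) + s * I))
  have a3 := Complex.abs_re_le_norm (∫ s : ℝ in y..1, f ((0:ℝ) + s * I))
  simp only [smul_eq_mul, zero_sub, sub_im, add_im, neg_im, mul_im, I_re, I_im, zero_mul, one_mul,
    zero_add] at hLHS
  -- top square integral
  have tsq : ∫ x in (0:ℝ)..1, ‖b (x + (1:ℝ) * I)‖^2 ≤ M^2 := by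
    have : ∫ x in (0:ℝ)..1, ‖b (x + (1:ℝ) * I)‖^2 ≤ ∫ x in (0:ℝ)..1, M^2 := by
      apply intervalIntegral.integral_mono_on zero_le_one (bint 1 one_pos) (by simp)
      intro x hx
      have := hM' x hx
      gcongr
    simpa using this
  have tsq0 : 0 ≤ ∫ x in (0:ℝ)..1, ‖b (x + (1:ℝ) * I)‖^2 :=
    intervalIntegral.integral_nonneg zero_le_one (fun x _ => by positivity)
  -- compare area terms
  have Fc : ContinuousOn (fun z : ℂ => (2 * z.im * ‖g z‖)^2 / z.im) R := by
    apply ContinuousOn.div _ Complex.continuous_im.continuousOn (fun z hz => (hRpos z hz).ne')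
    exact ((continuousOn_const.mul Complex.continuous_im.continuousOn).mul
      (hgc.mono hRsub).norm).pow 2
  have Fi := Fc.integrableOn_compact (μ := volume) hRc
  have Ai := hAc.integrableOn_compact (μ := volume) hRc
  have up : 4 * ∫ z in R, A z ≤ ∫ z in R, (2 * z.im * ‖g z‖)^2 / z.im := by
    rw [← integral_const_mul]
    apply setIntegral_mono_on (Ai.const_mul 4) Fi hRm
    intro z hz
    have hz0 := hRpos z hz
    have e : (2 * z.im * ‖g z‖)^2 / z.im = 4 * (z.im * ‖g z‖^2) := by field_simp; ring
    rw [e]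
    simp only [hA]
    gcongr
    linarith
  have Gi : IntegrableOn (fun z : ℂ => (64 * y) * z.im ^ (-2 : ℝ)) R := by
    have := prod_integrableOn (f := fun _ => 64 * y) (g := fun u : ℝ => u ^ (-2 : ℝ)) (s := Icc (0:ℝ) 1)
      (t := Icc y 1) continuousOn_const.integrableOn_Icc (by
        rw [integrableOn_Icc_iff_integrableOn_Ioo]; exact rpow_int (-2) hy hy1)
    exact this
  have Gv : ∫ z in R, (64 * y) * z.im ^ (-2 : ℝ) ≤ 64 := by
    rw [prod_integral (fun _ => 64 * y) (fun u : ℝ => u ^ (-2 : ℝ)),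
      integral_Icc_eq_integral_Ioc (f := fun u : ℝ => u ^ (-2 : ℝ)),
      ← intervalIntegral.integral_of_le hy1.le, integral_rpow (by
        right; refine ⟨by norm_num, ?_⟩; rw [uIcc_of_le hy1.le]; intro h0; linarith [h0.1])]
    simp
    norm_num
    rw [Real.rpow_neg_one]
    have : 64 * y * ((1 - y⁻¹) / -1) = 64 - 64 * y := by field_simp; ring
    linarith
  have lo : ∫ z in R, (2 * z.im * ‖g z‖)^2 / z.im ≤ 4 * (∫ z in R, A z) + 64 := by
    have : ∫ z in R, (2 * z.im * ‖g z‖)^2 / z.im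
        ≤ ∫ z in R, (4 * A z + (64 * y) * z.im ^ (-2 : ℝ)) := by
      apply setIntegral_mono_on Fi ((Ai.const_mul 4).add Gi) hRm
      intro z hz
      have hz0 := hRpos z hz
      have h4 := hB z hz0
      have e : (2 * z.im * ‖g z‖)^2 / z.im = 4 * (z.im * ‖g z‖^2) := by field_simp; ring
      show _ ≤ 4 * A z + (64 * y) * z.im ^ (-2 : ℝ)
      rw [e, Real.rpow_neg hz0.le]
      simp only [hA]
      norm_num
      have h5 : ‖g z‖ ≤ 4 / z.im := by rw [le_div_iff₀ hz0]; linarith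
      have h6 : ‖g z‖^2 ≤ 16 * (z.im^2)⁻¹ := by
        calc ‖g z‖^2 ≤ (4 / z.im)^2 := by gcongr
          _ = _ := by field_simp; norm_num
      nlinarith [mul_le_mul_of_nonneg_left h6 hy.le]
    rw [integral_add (Ai.const_mul 4) Gi, integral_const_mul] at this
    linarith
  have b1 := abs_le.1 (a1.trans htopI)
  have b2 := abs_le.1 (a2.trans s1)
  have b3 := abs_le.1 (a3.trans s0)
  rw [abs_le]
  constructor <;> linarith [b1.1, b1.2, b2.1, b2.2, b3.1, b3.2]


lemma box_le {μ : ℂ → ℂ} (hm : Measurable μ) (hb : ∀ ζ, ‖μ ζ‖ ≤ 1) {a b c d : ℝ} (hc : 0 < c)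
    (hab : a ≤ b) (hcd : c ≤ d) :
    ∫ z in Icc a b ×ℂ Icc c d, Fd μ z ≤ 64 * (b - a) * Real.log (d / c) := by
  have hd : 0 < d := hc.trans_le hcd
  have Gi : IntegrableOn (fun z : ℂ => 64 * (z.im)⁻¹) (Icc a b ×ℂ Icc c d) := by
    apply prod_integrableOn (f := fun _ => 64) (g := fun u : ℝ => u⁻¹)
      continuousOn_const.integrableOn_Icc
    apply ContinuousOn.integrableOn_Icc
    intro x hx
    exact (continuousAt_inv₀ (hc.trans_le hx.1).ne').continuousWithinAt
  have h1 : ∫ z in Icc a b ×ℂ Icc c d, Fd μ z ≤ ∫ z in Icc a b ×ℂ Icc c d, 64 * (z.im)⁻¹ := by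
    apply setIntegral_mono_on (Fd_intOn hm hb hc) Gi (reProdIm_meas measurableSet_Icc measurableSet_Icc)
    intro z hz
    have := Fd_le hb (hc.trans_le hz.2.1)
    rwa [div_eq_mul_inv] at this
  rw [prod_integral (fun _ => 64) (fun u : ℝ => u⁻¹),
    integral_Icc_eq_integral_Ioc (f := fun u : ℝ => u⁻¹),
    ← intervalIntegral.integral_of_le hcd, integral_inv_of_pos hc hd] at h1
  have h2 : ∫ _ in Icc a b, (64:ℝ) = 64 * (b - a) := by
    simp [Measure.real, hab]
    ring
  rwa [h2] at h1

/-- The quantity whose limsup is the asymptotic variance. -/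
noncomputable def sigU (b : ℂ → ℂ) (y : ℝ) : ℝ :=
  (1 / Real.log (1 / y)) * ∫ x in (0:ℝ)..1, ‖b ((x : ℂ) + (y : ℂ) * Complex.I)‖^2

lemma sigma01_eq (b : ℂ → ℂ) : sigma01 b = limsup (sigU b) (𝓝[>] (0:ℝ)) := rfl

lemma green_S {μ : ℂ → ℂ} (hm : Measurable μ) (hb : ∀ ζ, ‖μ ζ‖ ≤ 1) (hg : Good μ I) :
    ∃ K : ℝ, ∀ y : ℝ, 0 < y → y < 1 →
      |(∫ x in (0:ℝ)..1, ‖Ssharp μ (x + y * I)‖^2)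
        - ∫ z in Icc (0:ℝ) 1 ×ℂ Icc y 1, Fd μ z| ≤ K :=
  green (fun _ hz => S_deriv hm hb hz (Good_trans hm hb (by simp) hz hg)) (fun _ hz => T_bound hb hz)

lemma ev_Ioo {d : ℝ} (hd : 0 < d) : ∀ᶠ y in 𝓝[>] (0:ℝ), 0 < y ∧ y < d :=
  Ioo_mem_nhdsGT hd

lemma log_inv_tendsto : Tendsto (fun y : ℝ => Real.log (1 / y)) (𝓝[>] (0:ℝ)) atTop := by
  have : Tendsto (fun y : ℝ => Real.log (y⁻¹)) (𝓝[>] (0:ℝ)) atTop :=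
    Real.tendsto_log_atTop.comp tendsto_inv_nhdsGT_zero
  simpa [one_div] using this

lemma sigU_nonneg (b : ℂ → ℂ) : ∀ᶠ y in 𝓝[>] (0:ℝ), 0 ≤ sigU b y := by
  filter_upwards [ev_Ioo one_pos] with y hy
  unfold sigU
  apply mul_nonneg
  · have : 0 ≤ Real.log (1 / y) := Real.log_nonneg (by rw [le_div_iff₀ hy.1]; linarith [hy.2])
    positivity
  · exact intervalIntegral.integral_nonneg (by norm_num) (fun x _ => by positivity)

lemma sigU_le {μ : ℂ → ℂ} (hm : Measurable μ) (hb : ∀ ζ, ‖μ ζ‖ ≤ 1) :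
    ∀ᶠ y in 𝓝[>] (0:ℝ), sigU (Ssharp μ) y ≤ 65 := by
  by_cases hg : Good μ I
  · obtain ⟨K, hK⟩ := green_S hm hb hg
    filter_upwards [ev_Ioo one_pos, log_inv_tendsto.eventually_gt_atTop 0,
      log_inv_tendsto.eventually_ge_atTop K] with y hy h0 h1
    have h2 := (abs_le.1 (hK y hy.1 hy.2)).2
    have h3 := box_le hm hb hy.1 (zero_le_one (α := ℝ)) hy.2.le
    unfold sigU
    rw [one_div_mul_eq_div, div_le_iff₀ h0]
    linarith
  · filter_upwards [ev_Ioo one_pos] with y hy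
    have : sigU (Ssharp μ) y = 0 := by
      unfold sigU
      have : ∀ x : ℝ, Ssharp μ (x + y * I) = 0 := fun x => S_bad hm hb hg (by simpa using hy.1)
      simp [this]
    linarith

lemma le_sigma01 {μ : ℂ → ℂ} (hm : Measurable μ) (hb : ∀ ζ, ‖μ ζ‖ ≤ 1) {v : ℝ}
    (h : ∃ᶠ y in 𝓝[>] (0:ℝ), v ≤ sigU (Ssharp μ) y) : v ≤ sigma01 (Ssharp μ) := by
  rw [sigma01_eq]
  exact le_limsup_of_frequently_le h ⟨65, by simpa using sigU_le hm hb⟩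

lemma sigma01_le {μ : ℂ → ℂ} (hm : Measurable μ) (hb : ∀ ζ, ‖μ ζ‖ ≤ 1) :
    sigma01 (Ssharp μ) ≤ 65 := by
  rw [sigma01_eq]
  apply limsup_le_of_le _ (sigU_le hm hb)
  exact IsCoboundedUnder.of_frequently_ge (a := 0) (sigU_nonneg _).frequently

/-- Everywhere bounded representative. -/
noncomputable def cut (μ : ℂ → ℂ) (ζ : ℂ) : ℂ := if ‖μ ζ‖ ≤ 1 then μ ζ else 0

lemma cut_meas {μ : ℂ → ℂ} (hm : Measurable μ) : Measurable (cut μ) :=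
  Measurable.ite (measurableSet_le hm.norm measurable_const) hm measurable_const

lemma cut_le (μ : ℂ → ℂ) (ζ : ℂ) : ‖cut μ ζ‖ ≤ 1 := by
  unfold cut; split_ifs with h <;> simp [h]

lemma cut_ae {μ : ℂ → ℂ} (h : ∀ᵐ ζ : ℂ, ‖μ ζ‖ ≤ 1) : ∀ᵐ ζ : ℂ, μ ζ = cut μ ζ := by
  filter_upwards [h] with ζ hζ
  simp [cut, hζ]

lemma Ssharp_cut {μ : ℂ → ℂ} (h : ∀ᵐ ζ : ℂ, ‖μ ζ‖ ≤ 1) : Ssharp μ = Ssharp (cut μ) := by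
  funext z
  unfold Ssharp
  congr 1
  apply integral_congr_ae
  filter_upwards [ae_restrict_of_ae (cut_ae h)] with ζ hζ
  rw [hζ]

lemma Tderiv_cut {μ : ℂ → ℂ} (h : ∀ᵐ ζ : ℂ, ‖μ ζ‖ ≤ 1) : Tderiv μ = Tderiv (cut μ) := by
  funext z
  unfold Tderiv
  congr 1
  apply integral_congr_ae
  filter_upwards [ae_restrict_of_ae (cut_ae h)] with ζ hζ
  rw [hζ]

lemma Sig_bdd : ∀ v ∈ {v : ℝ | ∃ μ : ℂ → ℂ, Measurable μ ∧ (∀ᵐ ζ : ℂ, ‖μ ζ‖ ≤ 1) ∧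
    (∀ ζ : ℂ, 0 ≤ ζ.im → μ ζ = 0) ∧ v = sigma01 (Ssharp μ)}, v ≤ 65 := by
  rintro v ⟨μ, hm, hb, -, rfl⟩
  rw [Ssharp_cut hb]
  exact sigma01_le (cut_meas hm) (cut_le μ)

lemma Sig_le : SigmaSqH ≤ 65 := by
  apply Real.sSup_le Sig_bdd (by norm_num)

lemma le_Sig {μ : ℂ → ℂ} (hm : Measurable μ) (hb : ∀ ζ, ‖μ ζ‖ ≤ 1)
    (h0 : ∀ ζ : ℂ, 0 ≤ ζ.im → μ ζ = 0) : sigma01 (Ssharp μ) ≤ SigmaSqH :=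
  le_csSup ⟨65, Sig_bdd⟩ ⟨μ, hm, Eventually.of_forall hb, h0, rfl⟩


/-- Level of the tile at depth `v`. -/
noncomputable def kf (m : ℕ) (α v : ℝ) : ℤ := ⌊Real.log (1 / (α * v)) / Real.log m⌋

lemma kf_eq {m : ℕ} (hm : 2 ≤ m) {α v : ℝ} (hα : 0 < α) (k : ℕ)
    (h1 : ((m:ℝ)^k)⁻¹ / (m * α) < v) (h2 : v < ((m:ℝ)^k)⁻¹ / α) : kf m α v = k := by
  have m1 : (1:ℝ) < m := by exact_mod_cast hm
  have m0 : (0:ℝ) < m := by linarith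
  have l0 : 0 < Real.log m := Real.log_pos m1
  have v0 : 0 < v := lt_trans (by positivity) h1
  have h3 : (m:ℝ)^k ≤ 1 / (α * v) := by
    rw [lt_div_iff₀ hα, lt_inv_comm₀ (by positivity) (by positivity)] at h2
    rw [one_div, mul_comm]; exact h2.le
  have h4 : 1 / (α * v) < (m:ℝ)^(k+1) := by
    rw [div_lt_iff₀ (by positivity)] at h1
    rw [inv_lt_iff_one_lt_mul₀ (by positivity)] at h1
    rw [div_lt_iff₀ (by positivity), pow_succ]
    linarith
  unfold kf
  rw [Int.floor_eq_iff]
  constructor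
  · rw [le_div_iff₀ l0]
    have := Real.log_le_log (by positivity) h3
    rw [Real.log_pow] at this
    exact_mod_cast this
  · rw [div_lt_iff₀ l0]
    have := Real.log_lt_log (by positivity) h4
    rw [Real.log_pow] at this
    push_cast at this ⊢
    exact this

/-- The self-similar coefficient. -/
noncomputable def muT (μ : ℂ → ℂ) (m : ℕ) (α W x₀ : ℝ) (ζ : ℂ) : ℂ :=
  if (1 / (m:ℝ) ≤ ζ.re ∧ ζ.re ≤ 1) ∧ (-1 ≤ ζ.im ∧ ζ.im < 0) then
    μ (⟨x₀ + W * Int.fract ((m:ℝ) ^ (kf m α (-ζ.im)) * ζ.re), W * (m:ℝ) ^ (kf m α (-ζ.im)) * ζ.im⟩)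
  else 0

lemma muT_meas {μ : ℂ → ℂ} (hm : Measurable μ) (m : ℕ) (α W x₀ : ℝ) :
    Measurable (muT μ m α W x₀) := by
  have k1 : Measurable (fun ζ : ℂ => kf m α (-ζ.im)) := by
    unfold kf
    apply Int.measurable_floor.comp
    apply Measurable.div_const
    apply Real.measurable_log.comp
    exact measurable_const.div (measurable_const.mul Complex.measurable_im.neg)
  have k2 : Measurable (fun ζ : ℂ => (m:ℝ) ^ (kf m α (-ζ.im))) :=
    (measurable_of_countable (fun k : ℤ => (m:ℝ)^k)).comp k1
  apply Measurable.ite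
  · apply MeasurableSet.inter
    · exact (measurableSet_le measurable_const Complex.measurable_re).inter
        (measurableSet_le Complex.measurable_re measurable_const)
    · exact (measurableSet_le measurable_const Complex.measurable_im).inter
        (measurableSet_lt Complex.measurable_im measurable_const)
  · apply hm.comp
    have e : Measurable (fun p : ℝ × ℝ => (⟨p.1, p.2⟩ : ℂ)) :=
      Complex.measurableEquivRealProd.symm.measurable
    refine e.comp (Measurable.prodMk ?_ ?_)
    · exact measurable_const.add (measurable_const.mul
        (measurable_fract.comp (k2.mul Complex.measurable_re)))
    · exact (measurable_const.mul k2).mul Complex.measurable_im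
  · exact measurable_const

lemma muT_le {μ : ℂ → ℂ} (hb : ∀ ζ, ‖μ ζ‖ ≤ 1) (m : ℕ) (α W x₀ : ℝ) (ζ : ℂ) :
    ‖muT μ m α W x₀ ζ‖ ≤ 1 := by
  unfold muT; split_ifs
  · exact hb _
  · simp

lemma muT_zero (μ : ℂ → ℂ) (m : ℕ) (α W x₀ : ℝ) (ζ : ℂ) (h : 0 ≤ ζ.im) :
    muT μ m α W x₀ ζ = 0 := by
  unfold muT; rw [if_neg]; rintro ⟨-, -, h'⟩; linarith

lemma muT_good {μ : ℂ → ℂ} (hm : Measurable μ) (hb : ∀ ζ, ‖μ ζ‖ ≤ 1) {m : ℕ} (h2 : 2 ≤ m)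
    (α W x₀ : ℝ) : Good (muT μ m α W x₀) I := by
  have m0 : (0:ℝ) < m := by exact_mod_cast (by omega : 0 < m)
  have mm := muT_meas hm m α W x₀
  have mb := muT_le hb m α W x₀
  set ν := muT μ m α W x₀ with hν
  have hR : MeasurableSet (Icc (0:ℝ) 1 ×ℂ Icc (-1:ℝ) 0) := reProdIm_meas measurableSet_Icc measurableSet_Icc
  have hi : Integrable ((Icc (0:ℝ) 1 ×ℂ Icc (-1:ℝ) 0).indicator (fun _ => (1 + (m:ℝ)^2))) := by
    rw [integrable_indicator_iff hR]
    exact continuousOn_const.integrableOn_compact (IsCompact.reProdIm isCompact_Icc isCompact_Icc)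
  unfold Good
  refine Integrable.mono' hi.integrableOn ?_ ?_
  · apply Measurable.aestronglyMeasurable
    apply mm.mul
    fun_prop
  · filter_upwards [ae_restrict_mem measL] with ζ hζ
    by_cases hc : (1 / (m:ℝ) ≤ ζ.re ∧ ζ.re ≤ 1) ∧ (-1 ≤ ζ.im ∧ ζ.im < 0)
    · have hmem : ζ ∈ (Icc (0:ℝ) 1 ×ℂ Icc (-1:ℝ) 0) :=
        ⟨⟨le_trans (by positivity) hc.1.1, hc.1.2⟩, ⟨hc.2.1, hc.2.2.le⟩⟩
      rw [indicator_of_mem hmem, norm_mul]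
      have a1 : ‖((ζ - I)^2)⁻¹‖ ≤ 1 := by
        rw [norm_inv, norm_pow]
        apply inv_le_one_of_one_le₀
        apply one_le_pow₀
        have := Complex.abs_im_le_norm (ζ - I)
        have h3 : 1 ≤ |(ζ - I).im| := by
          rw [le_abs]; right; simp; linarith [hc.2.2]
        linarith
      have a2 : ‖(ζ^2)⁻¹‖ ≤ (m:ℝ)^2 := by
        rw [norm_inv, norm_pow, ← inv_pow]
        have := Complex.re_le_norm ζ
        have h4 : 1 / (m:ℝ) ≤ ‖ζ‖ := hc.1.1.trans this
        gcongr
        rw [inv_le_comm₀ (lt_of_lt_of_le (by positivity) h4) m0]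
        simpa using h4
      calc ‖ν ζ‖ * ‖((ζ - I)^2)⁻¹ - (ζ^2)⁻¹‖ ≤ 1 * (1 + (m:ℝ)^2) := by
            gcongr
            · exact mb ζ
            · exact (norm_sub_le _ _).trans (add_le_add a1 a2)
        _ = _ := one_mul _
    · have : ν ζ = 0 := by simp only [hν, muT]; rw [if_neg hc]
      rw [this]
      simp only [zero_mul, norm_zero]
      exact indicator_nonneg (fun _ _ => by positivity) _

/-- Tiles. -/
def tile (m : ℕ) (α : ℝ) (k j : ℕ) : Set ℂ :=
  Ioo ((j:ℝ) * ((m:ℝ)^k)⁻¹) ((j + 1:ℝ) * ((m:ℝ)^k)⁻¹) ×ℂ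
    Ioo (((m:ℝ)^k)⁻¹ / (m * α)) (((m:ℝ)^k)⁻¹ / α)

lemma tile_floor {m : ℕ} (h2 : 2 ≤ m) {k j : ℕ} {x : ℝ}
    (hx : x ∈ Ioo ((j:ℝ) * ((m:ℝ)^k)⁻¹) ((j + 1:ℝ) * ((m:ℝ)^k)⁻¹)) :
    ⌊(m:ℝ)^k * x⌋ = j := by
  have m0 : (0:ℝ) < (m:ℝ)^k := by
    have : (0:ℝ) < m := by exact_mod_cast (by omega : 0 < m)
    positivity
  obtain ⟨h1, h3⟩ := hx
  rw [← div_eq_mul_inv, div_lt_iff₀ m0] at h1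
  rw [← div_eq_mul_inv, lt_div_iff₀ m0] at h3
  rw [Int.floor_eq_iff]
  push_cast
  constructor <;> linarith

lemma tile_meas (m : ℕ) (α : ℝ) (k j : ℕ) : MeasurableSet (tile m α k j) := Q_meas _ _ _ _

lemma tile_disj {m : ℕ} (h2 : 2 ≤ m) {α : ℝ} (hα : 0 < α) {k j k' j' : ℕ} {z : ℂ}
    (h : z ∈ tile m α k j) (h' : z ∈ tile m α k' j') : k = k' ∧ j = j' := by
  have e1 := kf_eq h2 hα k h.2.1 h.2.2
  have e2 := kf_eq h2 hα k' h'.2.1 h'.2.2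
  have e : k = k' := by rw [e1] at e2; exact_mod_cast e2
  subst e
  refine ⟨rfl, ?_⟩
  have f1 := tile_floor h2 h.1
  have f2 := tile_floor h2 h'.1
  rw [f1] at f2
  exact_mod_cast f2

lemma tile_ge {μ : ℂ → ℂ} (hm : Measurable μ) (hb : ∀ ζ, ‖μ ζ‖ ≤ 1) {m : ℕ} (h2 : 2 ≤ m)
    {α t : ℝ} (hα : 1 ≤ α) (ht : 0 < t) (x₀ : ℝ) (k j : ℕ) (hj : m^k ≤ j) (hj' : j < m^(k+1)) :
    ((m:ℝ)^(k+1))⁻¹ * ((∫ z in Ioo x₀ (x₀ + α * t) ×ℂ Ioo (t / m) t, Fd μ z) / (α * t) - 2432)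
      ≤ ∫ z in tile m α (k+1) j, Fd (muT μ m α (α * t) x₀) z := by
  have m1 : (1:ℝ) < m := by exact_mod_cast h2
  have m0 : (0:ℝ) < m := by linarith
  have α0 : 0 < α := by linarith
  have W0 : 0 < α * t := by positivity
  set W := α * t with hW
  set N : ℝ := (m:ℝ)^(k+1) with hN
  have N0 : 0 < N := by positivity
  set a : ℝ := N⁻¹ / W with ha
  have a0 : 0 < a := by positivity
  set c : ℝ := j * N⁻¹ - a * x₀ with hc
  rw [Fd_tile _ a0 c (tile_meas _ _ _ _)]
  have pre : (fun ζ : ℂ => (a : ℂ) * ζ + c) ⁻¹' (tile m α (k+1) j)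
      = Ioo x₀ (x₀ + W) ×ℂ Ioo (t / m) t := by
    ext ω
    simp only [tile, mem_preimage, Complex.mem_reProdIm, add_re, mul_re, ofReal_re, ofReal_im,
      zero_mul, sub_zero, add_im, mul_im, add_zero, mem_Ioo, ← hN]
    have r1 : j * N⁻¹ < a * ω.re + c ↔ x₀ < ω.re := by
      rw [hc]
      constructor
      · intro h
        have : a * x₀ < a * ω.re := by linarith
        exact lt_of_mul_lt_mul_left this a0.le
      · intro h
        have := mul_lt_mul_of_pos_left h a0
        linarith
    have aW : a * W = N⁻¹ := by rw [ha]; field_simp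
    have r2 : a * ω.re + c < (j + 1) * N⁻¹ ↔ ω.re < x₀ + W := by
      rw [hc]
      constructor
      · intro h
        have : a * ω.re < a * (x₀ + W) := by rw [mul_add, aW]; linarith
        exact lt_of_mul_lt_mul_left this a0.le
      · intro h
        have := mul_lt_mul_of_pos_left h a0
        rw [mul_add, aW] at this
        linarith
    have e3 : N⁻¹ / (m * α) = a * (t / m) := by rw [ha, hW]; field_simp
    have e4 : N⁻¹ / α = a * t := by rw [ha, hW]; field_simp
    rw [r1, r2, e3, e4, mul_lt_mul_iff_right₀ a0, mul_lt_mul_iff_right₀ a0]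
  rw [pre]
  have key := Fd_err (μ₁ := μ) (μ₂ := fun ω => muT μ m α W x₀ ((a : ℂ) * ω + c)) hm
    ((muT_meas hm m α W x₀).comp (by fun_prop)) hb (fun ζ => muT_le hb m α W x₀ _)
    (x₀ := x₀) (W := W) (h := t / m) (t := t) (by positivity)
    (by rw [div_lt_iff₀ m0]; nlinarith) (by rw [hW]; nlinarith) (by
      intro ω hr hi
      have him : ((a : ℂ) * ω + c).im = a * ω.im := by simp
      have hre : ((a : ℂ) * ω + c).re = a * ω.re + c := by simp
      have hmem : (a : ℂ) * (⟨ω.re, -ω.im⟩ : ℂ) + c ∈ tile m α (k+1) j := by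
        have : (⟨ω.re, -ω.im⟩ : ℂ) ∈ (fun ζ : ℂ => (a : ℂ) * ζ + c) ⁻¹' (tile m α (k+1) j) := by
          rw [pre]; exact ⟨hr, hi⟩
        exact this
      have hmr : a * ω.re + c ∈ Ioo (j * N⁻¹) ((j + 1) * N⁻¹) := by simpa using hmem.1
      have hmi : -(a * ω.im) ∈ Ioo (N⁻¹ / (m * α)) (N⁻¹ / α) := by simpa using hmem.2
      have hk := kf_eq h2 α0 (k+1) hmi.1 hmi.2
      have hf := tile_floor h2 hmr
      have hjN : (j:ℝ) + 1 ≤ N := by rw [hN]; exact_mod_cast hj'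
      have hjN' : N / m ≤ j := by
        have : N / m = (m:ℝ)^k := by rw [hN, pow_succ]; field_simp
        rw [this]; exact_mod_cast hj
      have N1 : 1 ≤ N := one_le_pow₀ m1.le
      have c1 : 1 / (m:ℝ) ≤ a * ω.re + c := by
        refine le_trans ?_ hmr.1.le
        calc 1 / (m:ℝ) = (N / m) * N⁻¹ := by field_simp
          _ ≤ _ := by gcongr
      have c2 : a * ω.re + c ≤ 1 := by
        refine hmr.2.le.trans ?_
        calc (j + 1) * N⁻¹ ≤ N * N⁻¹ := by gcongr
          _ = 1 := by field_simp
      have c3 : -1 ≤ a * ω.im := by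
        have : N⁻¹ / α ≤ 1 := by
          rw [div_le_iff₀ α0]
          have := inv_le_one_of_one_le₀ N1
          linarith
        linarith [hmi.2]
      have c4 : a * ω.im < 0 := by
        have : 0 < N⁻¹ / (m * α) := by positivity
        linarith [hmi.1]
      simp only [muT, him, hre]
      rw [if_pos ⟨⟨c1, c2⟩, c3, c4⟩, hk, zpow_natCast, ← hN]
      congr 1
      have hfr : Int.fract (N * (a * ω.re + c)) = N * (a * ω.re + c) - j := by
        rw [Int.fract, hf]; simp
      rw [hfr]
      apply Complex.ext
      · simp only [hc, ha]; field_simp; ring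
      · simp only [ha]; field_simp)
  calc N⁻¹ * ((∫ z in Ioo x₀ (x₀ + W) ×ℂ Ioo (t / m) t, Fd μ z) / W - 2432)
      = a * ((∫ z in Ioo x₀ (x₀ + W) ×ℂ Ioo (t / m) t, Fd μ z) - 2432 * W) := by
        rw [ha]; field_simp
    _ ≤ _ := by
        apply mul_le_mul_of_nonneg_left _ a0.le
        linarith


lemma levels_ge {μ : ℂ → ℂ} (hm : Measurable μ) (hb : ∀ ζ, ‖μ ζ‖ ≤ 1) {m : ℕ} (h2 : 2 ≤ m)
    {α t : ℝ} (hα : 1 ≤ α) (ht : 0 < t) (x₀ : ℝ) (M : ℕ) :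
    M * ((1 - 1 / (m:ℝ)) *
      ((∫ z in Ioo x₀ (x₀ + α * t) ×ℂ Ioo (t / m) t, Fd μ z) / (α * t) - 2432))
      ≤ ∫ z in Icc (0:ℝ) 1 ×ℂ Icc (((m:ℝ)^(M+1))⁻¹ / α) 1, Fd (muT μ m α (α * t) x₀) z := by
  have m1 : (1:ℝ) < m := by exact_mod_cast h2
  have m0 : (0:ℝ) < m := by linarith
  have α0 : 0 < α := by linarith
  set D := (∫ z in Ioo x₀ (x₀ + α * t) ×ℂ Ioo (t / m) t, Fd μ z) / (α * t) - 2432 with hD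
  set ν := muT μ m α (α * t) x₀ with hν
  have νm : Measurable ν := muT_meas hm m α (α * t) x₀
  have νb : ∀ ζ, ‖ν ζ‖ ≤ 1 := muT_le hb m α (α * t) x₀
  set J : Finset (Σ _ : ℕ, ℕ) := (Finset.range M).sigma (fun k => Finset.Ico (m^k) (m^(k+1))) with hJ
  have hsum := integral_biUnion_finset (μ := volume) (f := Fd ν) J
    (s := fun p : (Σ _ : ℕ, ℕ) => tile m α (p.1 + 1) p.2)
    (fun p _ => tile_meas _ _ _ _)
    (by
      rintro ⟨k, j⟩ - ⟨k', j'⟩ - hne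
      rw [Function.onFun, Set.disjoint_left]
      intro z hz hz'
      obtain ⟨e1, e2⟩ := tile_disj h2 α0 hz hz'
      simp only at e1 e2
      apply hne
      obtain rfl : k = k' := by omega
      obtain rfl : j = j' := e2
      rfl)
    (fun p _ => Fd_intOn_Q νm νb (by positivity))
  have hsub : (⋃ p ∈ J, tile m α (p.1 + 1) p.2) ⊆
      Icc (0:ℝ) 1 ×ℂ Icc (((m:ℝ)^(M+1))⁻¹ / α) 1 := by
    intro z hz
    simp only [mem_iUnion] at hz
    obtain ⟨⟨k, j⟩, hp, hz⟩ := hz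
    simp only [hJ, Finset.mem_sigma, Finset.mem_range, Finset.mem_Ico] at hp
    obtain ⟨hk, hj, hj'⟩ := hp
    simp only [tile] at hz
    obtain ⟨⟨r1, r2⟩, i1, i2⟩ := hz
    set N : ℝ := (m:ℝ)^(k+1) with hN
    have N1 : 1 ≤ N := one_le_pow₀ m1.le
    have hjN : (j:ℝ) + 1 ≤ N := by rw [hN]; exact_mod_cast hj'
    refine ⟨⟨le_trans (by positivity) r1.le, r2.le.trans ?_⟩, ?_, i2.le.trans ?_⟩
    · calc (j + 1) * N⁻¹ ≤ N * N⁻¹ := by gcongr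
          _ = 1 := by field_simp
    · refine le_trans ?_ i1.le
      have : N⁻¹ / (m * α) = ((m:ℝ)^(k+2))⁻¹ / α := by rw [hN]; field_simp; ring
      rw [this]
      have hpow : (m:ℝ)^(k+2) ≤ (m:ℝ)^(M+1) := pow_le_pow_right₀ m1.le (by omega)
      gcongr
    · rw [div_le_iff₀ α0]
      have := inv_le_one_of_one_le₀ N1
      linarith
  have y0 : 0 < ((m:ℝ)^(M+1))⁻¹ / α := by positivity
  have hmono : ∫ z in (⋃ p ∈ J, tile m α (p.1 + 1) p.2), Fd ν z
      ≤ ∫ z in Icc (0:ℝ) 1 ×ℂ Icc (((m:ℝ)^(M+1))⁻¹ / α) 1, Fd ν z := by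
    apply setIntegral_mono_set (Fd_intOn νm νb y0) _ hsub.eventuallyLE
    filter_upwards [ae_restrict_mem (reProdIm_meas measurableSet_Icc measurableSet_Icc)] with z hz
    exact Fd_nonneg ν (y0.trans_le hz.2.1)
  refine le_trans ?_ hmono
  rw [hsum, hJ, Finset.sum_sigma]
  calc (M:ℝ) * ((1 - 1 / (m:ℝ)) * D) = ∑ k ∈ Finset.range M, (1 - 1 / (m:ℝ)) * D := by simp
    _ ≤ _ := by
      apply Finset.sum_le_sum
      intro k _
      calc (1 - 1 / (m:ℝ)) * D = ∑ j ∈ Finset.Ico (m^k) (m^(k+1)), ((m:ℝ)^(k+1))⁻¹ * D := by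
            rw [Finset.sum_const, Nat.card_Ico, nsmul_eq_mul,
              Nat.cast_sub (Nat.pow_le_pow_right (by omega) (by omega))]
            push_cast
            rw [pow_succ]
            field_simp
        _ ≤ _ := by
            apply Finset.sum_le_sum
            intro j hj
            rw [Finset.mem_Ico] at hj
            exact tile_ge hm hb h2 hα ht x₀ k j hj.1 hj.2

lemma P_le {μ : ℂ → ℂ} (hm : Measurable μ) (hb : ∀ ζ, ‖μ ζ‖ ≤ 1) {m : ℕ} (h2 : 2 ≤ m)
    {α t : ℝ} (hα : 1 ≤ α) (ht : 0 < t) (x₀ : ℝ) :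
    (1 - 1 / (m:ℝ)) *
      ((∫ z in Ioo x₀ (x₀ + α * t) ×ℂ Ioo (t / m) t, Fd μ z) / (α * t) - 2432)
      ≤ SigmaSqH * Real.log m := by
  have m1 : (1:ℝ) < m := by exact_mod_cast h2
  have m0 : (0:ℝ) < m := by linarith
  have α0 : 0 < α := by linarith
  have l0 : 0 < Real.log m := Real.log_pos m1
  have lev := levels_ge hm hb h2 hα ht x₀
  set P := (1 - 1 / (m:ℝ)) *
      ((∫ z in Ioo x₀ (x₀ + α * t) ×ℂ Ioo (t / m) t, Fd μ z) / (α * t) - 2432) with hP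
  set ν := muT μ m α (α * t) x₀ with hν
  have νm : Measurable ν := muT_meas hm m α (α * t) x₀
  have νb : ∀ ζ, ‖ν ζ‖ ≤ 1 := muT_le hb m α (α * t) x₀
  obtain ⟨K, hK⟩ := green_S νm νb (muT_good hm hb h2 α (α * t) x₀)
  rw [← div_le_iff₀ l0]
  refine le_trans ?_ (le_Sig νm νb (muT_zero μ m α (α * t) x₀))
  apply le_of_forall_lt
  intro v' hv'
  obtain ⟨v, hv1, hv⟩ := exists_between hv'
  refine lt_of_lt_of_le hv1 (le_sigma01 νm νb ?_)
  have hd : 0 < P - v * Real.log m := by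
    rw [lt_div_iff₀ l0] at hv; linarith
  have yt : Tendsto (fun M : ℕ => ((m:ℝ)^(M+1))⁻¹ / α) atTop (𝓝[>] (0:ℝ)) := by
    rw [tendsto_nhdsWithin_iff]
    constructor
    · have h1 : Tendsto (fun M : ℕ => (m:ℝ)^(M+1)) atTop atTop :=
        (tendsto_pow_atTop_atTop_of_one_lt m1).comp (tendsto_add_atTop_nat 1)
      have := (tendsto_inv_atTop_zero.comp h1).div_const α
      simpa using this
    · exact Eventually.of_forall (fun M => by rw [mem_Ioi]; positivity)
  apply yt.frequently
  apply Eventually.frequently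
  have big : Tendsto (fun M : ℕ => (M:ℝ) * (P - v * Real.log m)) atTop atTop :=
    tendsto_natCast_atTop_atTop.atTop_mul_const hd
  filter_upwards [big.eventually_ge_atTop (v * (Real.log m + Real.log α) + K)] with M hM
  have y0 : 0 < ((m:ℝ)^(M+1))⁻¹ / α := by positivity
  have pw : 1 < (m:ℝ)^(M+1) := one_lt_pow₀ m1 (by omega)
  have y1 : ((m:ℝ)^(M+1))⁻¹ / α < 1 := by
    rw [div_lt_iff₀ α0]
    have := inv_lt_one_of_one_lt₀ pw
    linarith
  have g1 := (abs_le.1 (hK _ y0 y1)).1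
  have g2 := lev M
  have lg : Real.log (1 / (((m:ℝ)^(M+1))⁻¹ / α)) = (M + 1) * Real.log m + Real.log α := by
    have : 1 / (((m:ℝ)^(M+1))⁻¹ / α) = (m:ℝ)^(M+1) * α := by field_simp
    rw [this, Real.log_mul (by positivity) (by positivity), Real.log_pow]
    push_cast; ring
  have lα : 0 ≤ Real.log α := Real.log_nonneg hα
  unfold sigU
  rw [lg, one_div_mul_eq_div, le_div_iff₀ (by positivity)]
  nlinarith

theorem stmt1 : ∃ C : ℝ, 0 < C ∧ ∀ μ : ℂ → ℂ, Measurable μ →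
    (∀ᵐ ζ : ℂ, ‖μ ζ‖ ≤ 1) → (∀ ζ : ℂ, 0 ≤ ζ.im → μ ζ = 0) →
    ∀ n : ℝ, 2 ≤ n → ∀ α : ℝ, 1 ≤ α → ∀ x₀ t : ℝ, 0 < t →
    (∫ z in {z : ℂ | z.re ∈ Set.Icc x₀ (x₀ + α * t) ∧ z.im ∈ Set.Icc (t / n) t},
        (2 * z.im * ‖Tderiv μ z‖)^2 / z.im) / (α * t * Real.log n)
      ≤ SigmaSqH + C / Real.log n := by
  refine ⟨2600, by norm_num, ?_⟩
  intro μ₀ hm₀ hb₀ _ n hn α hα x₀ t ht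
  rw [Tderiv_cut hb₀]
  have hm := cut_meas hm₀
  have hb := cut_le μ₀
  set μ := cut μ₀ with hμ
  set m := ⌈n⌉₊ with hmm
  have hnm : n ≤ m := Nat.le_ceil n
  have h2 : 2 ≤ m := by
    have : (2:ℝ) ≤ m := hn.trans hnm
    exact_mod_cast this
  have hm1 : (m:ℝ) < n + 1 := Nat.ceil_lt_add_one (by linarith)
  have n0 : 0 < n := by linarith
  have m0 : (0:ℝ) < m := by linarith
  have W0 : 0 < α * t := by positivity
  have ln0 : 0 < Real.log n := Real.log_pos (by linarith)
  have c0 : 0 < t / m := by positivity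
  -- the open box
  set X := ∫ z in Ioo x₀ (x₀ + α * t) ×ℂ Ioo (t / m) t, Fd μ z with hX
  have hcl : ∫ z in Icc x₀ (x₀ + α * t) ×ℂ Icc (t / m) t, Fd μ z = X := by
    apply setIntegral_congr_set
    have e1 : (Icc x₀ (x₀ + α * t) ×ˢ Icc (t / m) t : Set (ℝ × ℝ)) =ᵐ[volume]
        (Ioo x₀ (x₀ + α * t) ×ˢ Ioo (t / m) t : Set (ℝ × ℝ)) :=
      Measure.set_prod_ae_eq Ioo_ae_eq_Icc.symm Ioo_ae_eq_Icc.symm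
    exact Complex.volume_preserving_equiv_real_prod.quasiMeasurePreserving.preimage_ae_eq e1
  have hbox : (∫ z in {z : ℂ | z.re ∈ Set.Icc x₀ (x₀ + α * t) ∧ z.im ∈ Set.Icc (t / n) t},
      (2 * z.im * ‖Tderiv μ z‖)^2 / z.im) ≤ X := by
    rw [← hcl]
    apply setIntegral_mono_set (Fd_intOn hm hb c0)
    · filter_upwards [ae_restrict_mem (reProdIm_meas measurableSet_Icc measurableSet_Icc)] with z hz
      exact Fd_nonneg μ (c0.trans_le hz.2.1)
    · apply LE.le.eventuallyLE
      intro z hz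
      refine ⟨hz.1, le_trans ?_ hz.2.1, hz.2.2⟩
      gcongr
  have hXle : X ≤ 64 * (α * t) * Real.log m := by
    have := box_le hm hb (a := x₀) (b := x₀ + α * t) (c := t / m) (d := t) c0 (by linarith)
      (by rw [div_le_iff₀ m0]; nlinarith)
    rw [hcl] at this
    have e : t / (t / m) = (m:ℝ) := by field_simp
    rw [e] at this
    linarith
  have hP := P_le hm hb h2 hα ht x₀
  rw [← hX] at hP
  set Y := X / (α * t) with hY
  have hYle : Y ≤ 64 * Real.log m := by
    rw [hY, div_le_iff₀ W0]; linarith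
  have lm : Real.log m ≤ m := (Real.log_le_sub_one_of_pos m0).trans (by linarith)
  have lmn : Real.log m ≤ Real.log n + 1 := by
    have : Real.log m ≤ Real.log (n * 2) := Real.log_le_log m0 (by linarith)
    rw [Real.log_mul (by positivity) (by norm_num)] at this
    have := Real.log_two_lt_d9
    linarith
  have lnm : Real.log n ≤ Real.log m := Real.log_le_log n0 hnm
  have hYm : Y / m ≤ 64 := by
    rw [div_le_iff₀ m0]; linarith
  have hS := Sig_le
  have e1 : (1 - 1 / (m:ℝ)) * (Y - 2432) = Y - 2432 - Y / m + 2432 / m := by ring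
  have p1 : 0 ≤ 2432 / (m:ℝ) := by positivity
  have hfin : Y ≤ SigmaSqH * Real.log n + 2600 := by
    have : SigmaSqH * Real.log m ≤ SigmaSqH * Real.log n + 65 := by
      nlinarith [mul_le_mul_of_nonneg_right hS (sub_nonneg.2 lnm)]
    linarith
  calc _ ≤ X / (α * t * Real.log n) := by gcongr
    _ = Y / Real.log n := by rw [hY, div_div]
    _ ≤ (SigmaSqH * Real.log n + 2600) / Real.log n := by gcongr
    _ = _ := by field_simp
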